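/- Replacement by local sample averages: fix d ≥ 2, constants 0 < u_- < u_+ < 1, C₁ > 0, δ > 0, a bounded function a : [0,1]³ → ℝ, and n₁, n₂ ∈ ℤ^d with at least one strictly positive component each and {n₁, n₂, 0} distinct. For κ > 0 small enough, set ℓ = N^{(1−κ)/d} (assumed a positive integer). Then for every ε₀ > 0 there is a constant C_{ε₀,κ} > 0 such that the following holds for all N large: if 1 ≤ K ≤ δ(log N)^{1/2}, if u ∈ [u_-,u_+]^{T_N^d} satisfies |u_x − u_y| ≤ C₁ K/N for all nearest-neighbor pairs |x−y| = 1, if ν is the product Bernoulli measure with means u, and if dμ = f dν for a probability density f ≥ 0, then ∫ (V_a − V_a^ℓ) f dν ≤ ε₀ N² D_K(√f; ν) + C_{ε₀,κ} ( H(μ|ν) + N^{d−1+κ} ), where V_a = K Σ_{x∈T_N^d} ã_x ω_{x+n₁} with ã_x = a(u_x, u_{x+n₁}, u_{x+n₂}) ω_x, and V_a^ℓ = K Σ_{x∈T_N^d} (⟵ã⟶)_{x,ℓ} (⟶ω_{·+n₁}⟵)_{x,ℓ} denotes the product of the left local average of ã and the right local average of ω_{·+n₁} over the box Λ_ℓ.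 -/

import Mathlib

/-!
Write `W_v` for `ω_v`. Moving the left average from `ã` onto `ω`, the difference `V_a - V_a^ℓ` becomes
`K Σ_z ã_z (W_{z+n₁} - Σ_v q(v) W_{z+n₁+v})`, where `q` is the law of the sum of two independent
uniform points of `Λ_ℓ` (`sum_left_right`). The signed measure `δ_0 - q` is the divergence of a flow
`ψ` supported on the box of side `2 ℓ`, so the difference is a sum over bonds,
`K Σ_{x,j} h_{x,j} (W_x - W_{x+e_j})` with `h_{x,j} = Σ_z ψ_j(x - n₁ - z) ã_z` (`sum_flux`).

*The flow.* The uniform measure on a box is carried to the one on the box with one side longer by one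
by an explicit flow of squared `ℓ²` norm at most the inverse volume (`flow_step`). Growing a cube from
side `k` to side `k + 1` thus costs at most `d k^{-d/2} ≤ d / k`, as `d ≥ 2`, and the triangle inequality
gives a flow from `δ_0` to the uniform measure on `Λ_ℓ` of norm `O(log ℓ)`. Averaging the translates of
this flow handles the second averaging (`flow_double`). The logarithm is not optimal, but it is
harmless here, and this route does not distinguish between dimensions.

*Integration by parts.* As `n₁` has a positive component and `ψ` lives on nonnegative coordinates,
`h_{x,j}` does not depend on the occupation of `x` and `x + e_j` (`field_swap`). Under the exchange of
these two sites `(ω_x - ω_{x+e_j}) ν` is antisymmetric up to an error of order `|u_x - u_{x+e_j}|`, so the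
Cauchy-Schwarz inequality bounds the contribution of the bond by a small multiple of its Dirichlet form
plus the second moment of `h_{x,j}`, with factor `K² / N` after the summation (`int_by_parts`,
`fixed_bound`).

*Second moments.* Under `ν` the field `h_{x,j}` is a linear form in independent centred bounded
variables, so it is sub-Gaussian, and the exponential of a small multiple of its square is integrable
(`exp_sq_linear`). Fields of the same colour are independent if the torus is coloured with `O(ℓ^d)`
colours, and the entropy inequality for each colour gives
`Σ_x E_f[h_{x,j}²] ≤ C ‖ψ_j‖² (ℓ^d H + N^d)` (`sum_sq_bound`).

*Conclusion.* Since `ℓ^d = N^{1-κ}` and `K² ≤ δ² log N`, the error is at most a constant times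
`(log N)³ N^{-1} (N^{1-κ} H + N^d)`, and `(log N)³` is eventually below `N^κ` (`error_bound`). Any
`0 < κ < 1` is admissible.
-/

open Finset

/-- The discrete torus `T_N^d = (ℤ/Nℤ)^d`. -/
abbrev Torus (d N : ℕ) := Fin d → ZMod N

/-- The configuration space `X_N = {0,1}^{T_N^d}`. -/
abbrev Config (d N : ℕ) := Torus d N → Bool

/-- The value in `{0,1} ⊂ ℝ` of an occupation variable. -/
noncomputable def bval : Bool → ℝ := fun b => if b then 1 else 0

/-- The `i`-th unit vector of the discrete torus. -/
def uvec (d N : ℕ) (i : Fin d) : Torus d N := fun j => if j = i then 1 else 0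

/-- `swapC x y η = η^{x,y}`. -/
def swapC {d N : ℕ} (x y : Torus d N) (η : Config d N) : Config d N :=
  fun z => η (Equiv.swap x y z)

/-- The product Bernoulli measure with means `u`. -/
noncomputable def bern {d N : ℕ} [NeZero N] (u : Torus d N → ℝ) (η : Config d N) : ℝ :=
  ∏ x : Torus d N, (if η x then u x else 1 - u x)

/-- `χ(ρ) = ρ(1-ρ)`. -/
noncomputable def chi (ρ : ℝ) : ℝ := ρ * (1 - ρ)

/-- `ω_x = (η_x - u_x)/χ(u_x)`. -/
noncomputable def omg {d N : ℕ} (u : Torus d N → ℝ) (x : Torus d N) (η : Config d N) : ℝ :=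
  (bval (η x) - u x) / chi (u x)

/-- The projection `ℤ^d → T_N^d`. -/
def castT (d N : ℕ) (w : Fin d → ℤ) : Torus d N := fun j => ((w j : ℤ) : ZMod N)

/-- A point of the box `Λ_ℓ = [0,ℓ-1]^d` regarded inside the torus. -/
def finToT (d N ℓ : ℕ) (y : Fin d → Fin ℓ) : Torus d N := fun j => ((y j : ℕ) : ZMod N)

/-- The right local sample average `⟶g⟵_{x,ℓ} = |Λ_ℓ|⁻¹ Σ_{y ∈ Λ_ℓ} g_{x+y}`. -/
noncomputable def rightAvg {d N : ℕ} [NeZero N] (ℓ : ℕ)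
    (g : Torus d N → Config d N → ℝ) (x : Torus d N) (η : Config d N) : ℝ :=
  ((ℓ:ℝ)^d)⁻¹ * ∑ y : Fin d → Fin ℓ, g (x + finToT d N ℓ y) η

/-- The left local sample average `⟵g⟶_{x,ℓ} = |Λ_ℓ|⁻¹ Σ_{y ∈ Λ_ℓ} g_{x-y}`. -/
noncomputable def leftAvg {d N : ℕ} [NeZero N] (ℓ : ℕ)
    (g : Torus d N → Config d N → ℝ) (x : Torus d N) (η : Config d N) : ℝ :=
  ((ℓ:ℝ)^d)⁻¹ * ∑ y : Fin d → Fin ℓ, g (x - finToT d N ℓ y) η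

/-- The Kawasaki Dirichlet form `D_K(g;ν) = (1/4) Σ_{x,y:|x-y|=1} ∫ (g(η^{x,y}) - g(η))² dν`,
the sum running over ordered nearest-neighbour pairs. -/
noncomputable def dirK {d N : ℕ} [NeZero N] (g : Config d N → ℝ) (ν : Config d N → ℝ) : ℝ :=
  (1/4) * ∑ x : Torus d N, ∑ i : Fin d, ∑ η : Config d N,
    (((g (swapC x (x + uvec d N i) η) - g η)^2 + (g (swapC x (x - uvec d N i) η) - g η)^2) * ν η)

/-! ### Sub-Gaussian bounds, independence and the entropy inequality under a product measure -/

theorem sum_prod_config {d N : ℕ} [NeZero N] (F : Torus d N → Bool → ℝ) :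
    ∑ η : Config d N, ∏ x, F x (η x) = ∏ x, (F x true + F x false) := by
  rw [← Fintype.prod_sum]
  simp

theorem bern_nonneg {d N : ℕ} [NeZero N] {u : Torus d N → ℝ} (hu : ∀ x, 0 ≤ u x ∧ u x ≤ 1)
    (η : Config d N) : 0 ≤ bern u η := by
  unfold bern
  refine Finset.prod_nonneg fun x _ => ?_
  have := hu x
  split_ifs <;> linarith

theorem sum_bern {d N : ℕ} [NeZero N] (u : Torus d N → ℝ) :
    ∑ η : Config d N, bern u η = 1 := by
  unfold bern
  rw [sum_prod_config (fun x b => if b then u x else 1 - u x)]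
  simp

/-- Mean-zero variables bounded by `A` are sub-Gaussian with variance proxy `A ^ 2` (Hoeffding),
for the two-point distribution `p δ_true + (1 - p) δ_false`. -/
theorem mgf_two_point {p A y₁ y₀ : ℝ} (hp0 : 0 ≤ p) (hp1 : p ≤ 1) (hA : 0 < A)
    (h1 : |y₁| ≤ A) (h0 : |y₀| ≤ A) (hm : p * y₁ + (1 - p) * y₀ = 0) (c : ℝ) :
    Real.exp (c * y₁) * p + Real.exp (c * y₀) * (1 - p) ≤ Real.exp (c ^ 2 * A ^ 2 / 2) := by
  have key : ∀ y : ℝ, |y| ≤ A →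
      Real.exp (c * y) ≤ Real.cosh (c * A) + y / A * Real.sinh (c * A) := by
    intro y hy
    have h : |y / A| ≤ 1 := by
      rw [abs_div, abs_of_pos hA]
      exact (div_le_one hA).2 hy
    have := Real.exp_mul_le_cosh_add_mul_sinh h (c * A)
    have e : y / A * (c * A) = c * y := by field_simp
    rwa [e] at this
  have k1 := mul_le_mul_of_nonneg_right (key y₁ h1) hp0
  have k0 := mul_le_mul_of_nonneg_right (key y₀ h0) (sub_nonneg.2 hp1)
  have e : (Real.cosh (c * A) + y₁ / A * Real.sinh (c * A)) * p
      + (Real.cosh (c * A) + y₀ / A * Real.sinh (c * A)) * (1 - p) = Real.cosh (c * A) := by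
    have : (Real.cosh (c * A) + y₁ / A * Real.sinh (c * A)) * p
      + (Real.cosh (c * A) + y₀ / A * Real.sinh (c * A)) * (1 - p)
      = Real.cosh (c * A) + (p * y₁ + (1 - p) * y₀) / A * Real.sinh (c * A) := by ring
    rw [this, hm]; ring
  have := Real.cosh_le_exp_half_sq (c * A)
  rw [mul_pow] at this
  linarith

/-- Sub-Gaussian bound for a sum of independent, centred, bounded single-site functions `Y z`. -/
theorem mgf_linear {d N : ℕ} [NeZero N] {u : Torus d N → ℝ} (hu : ∀ x, 0 ≤ u x ∧ u x ≤ 1)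
    {A : ℝ} (hA : 0 < A) (Y : Torus d N → Bool → ℝ) (hY : ∀ z b, |Y z b| ≤ A)
    (hm : ∀ z, u z * Y z true + (1 - u z) * Y z false = 0) (c : Torus d N → ℝ) :
    ∑ η : Config d N, Real.exp (∑ z, c z * Y z (η z)) * bern u η
      ≤ Real.exp ((∑ z, c z ^ 2) * A ^ 2 / 2) := by
  have e : ∀ η : Config d N, Real.exp (∑ z, c z * Y z (η z)) * bern u η
      = ∏ z, (fun z b => Real.exp (c z * Y z b) * (if b then u z else 1 - u z)) z (η z) := by
    intro η
    rw [Real.exp_sum, bern, ← Finset.prod_mul_distrib]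
  rw [Finset.sum_congr rfl fun η _ => e η,
    sum_prod_config (fun z b => Real.exp (c z * Y z b) * (if b then u z else 1 - u z)),
    Finset.sum_mul, Finset.sum_div, Real.exp_sum]
  refine Finset.prod_le_prod (fun z _ => ?_) fun z _ => ?_
  · have := hu z
    have h1 := Real.exp_pos (c z * Y z true)
    have h2 := Real.exp_pos (c z * Y z false)
    simp only [if_true, Bool.false_eq_true, if_false]
    exact add_nonneg (mul_nonneg h1.le this.1) (mul_nonneg h2.le (by linarith))
  · simpa using mgf_two_point (hu z).1 (hu z).2 hA (hY z true) (hY z false) (hm z) (c z)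

theorem exp_sq_eq_integral (t : ℝ) :
    MeasureTheory.Integrable (fun x : ℝ => Real.exp (-x ^ 2 + 2 * x * t)) ∧
    ∫ x : ℝ, Real.exp (-x ^ 2 + 2 * x * t) = Real.exp (t ^ 2) * √Real.pi := by
  have e : (fun x : ℝ => Real.exp (-x ^ 2 + 2 * x * t))
      = fun x => Real.exp (t ^ 2) * (fun y => Real.exp (-1 * y ^ 2)) (x - t) := by
    funext x
    rw [← Real.exp_add]
    congr 1
    ring
  constructor
  · rw [e]
    exact ((integrable_exp_neg_mul_sq one_pos).comp_sub_right t).const_mul _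
  · rw [e, MeasureTheory.integral_const_mul,
      MeasureTheory.integral_sub_right_eq_self (fun y : ℝ => Real.exp (-1 * y ^ 2)) t,
      integral_gaussian, div_one]

/-- Exponential square integrability of a sub-Gaussian linear form, by Gaussian linearization:
`exp (t ^ 2)` is, up to `√π`, the integral of `exp (- x ^ 2 + 2 * x * t)` over `x`, which reduces
the claim to the bound on the exponential moments. -/
theorem exp_sq_linear {d N : ℕ} [NeZero N] {u : Torus d N → ℝ} (hu : ∀ x, 0 ≤ u x ∧ u x ≤ 1)
    {A : ℝ} (hA : 0 < A) (Y : Torus d N → Bool → ℝ) (hY : ∀ z b, |Y z b| ≤ A)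
    (hm : ∀ z, u z * Y z true + (1 - u z) * Y z false = 0) (c : Torus d N → ℝ)
    {γ : ℝ} (hγ : 0 ≤ γ) (hs : 4 * γ * ((∑ z, c z ^ 2) * A ^ 2) ≤ 1) :
    ∑ η : Config d N, Real.exp (γ * (∑ z, c z * Y z (η z)) ^ 2) * bern u η ≤ √2 := by
  have hpi : 0 < √Real.pi := Real.sqrt_pos.2 Real.pi_pos
  have e1 : (∑ η : Config d N, Real.exp (γ * (∑ z, c z * Y z (η z)) ^ 2) * bern u η) * √Real.pi
      = ∫ x : ℝ, ∑ η : Config d N,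
          Real.exp (-x ^ 2 + 2 * x * (√γ * ∑ z, c z * Y z (η z))) * bern u η := by
    rw [MeasureTheory.integral_finsetSum _
      (fun η _ => (exp_sq_eq_integral _).1.mul_const _), Finset.sum_mul]
    refine Finset.sum_congr rfl fun η _ => ?_
    rw [MeasureTheory.integral_mul_const, (exp_sq_eq_integral _).2, mul_pow, Real.sq_sqrt hγ]
    ring
  have e2 : ∫ x : ℝ, Real.exp (-(1 / 2) * x ^ 2) = √2 * √Real.pi := by
    rw [integral_gaussian, ← Real.sqrt_mul (by norm_num)]
    congr 1
    field_simp
  have e3 : (∫ x : ℝ, ∑ η : Config d N,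
          Real.exp (-x ^ 2 + 2 * x * (√γ * ∑ z, c z * Y z (η z))) * bern u η)
        ≤ ∫ x : ℝ, Real.exp (-(1 / 2) * x ^ 2) := by
    refine MeasureTheory.integral_mono
      (MeasureTheory.integrable_finsetSum _ fun η _ => (exp_sq_eq_integral _).1.mul_const _)
      (integrable_exp_neg_mul_sq (by norm_num)) fun x => ?_
    have h := mgf_linear hu hA Y hY hm (fun z => 2 * x * √γ * c z)
    have h1 : ∀ η : Config d N,
        Real.exp (-x ^ 2 + 2 * x * (√γ * ∑ z, c z * Y z (η z))) * bern u η
        = Real.exp (-x ^ 2) * (Real.exp (∑ z, 2 * x * √γ * c z * Y z (η z)) * bern u η) := by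
      intro η
      rw [Real.exp_add, mul_assoc]
      congr 3
      rw [← mul_assoc, Finset.mul_sum]
      exact Finset.sum_congr rfl fun z _ => by ring
    show ∑ η : Config d N, _ ≤ _
    rw [Finset.sum_congr rfl fun η _ => h1 η, ← Finset.mul_sum]
    refine (mul_le_mul_of_nonneg_left h (Real.exp_pos _).le).trans ?_
    rw [← Real.exp_add]
    refine Real.exp_le_exp.2 ?_
    have h2 : (∑ z, (2 * x * √γ * c z) ^ 2) = 4 * x ^ 2 * γ * ∑ z, c z ^ 2 := by
      rw [Finset.mul_sum]
      refine Finset.sum_congr rfl fun z _ => ?_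
      rw [mul_pow, mul_pow, Real.sq_sqrt hγ]; ring
    rw [h2]
    nlinarith [mul_le_mul_of_nonneg_left hs (sq_nonneg x)]
  rw [← e1, e2] at e3
  exact le_of_mul_le_mul_right e3 hpi

/-- Functions of disjoint sets of sites are independent under a product measure.  The proof doubles
the space and exchanges the two copies off `S`. -/
theorem bern_indep {d N : ℕ} [NeZero N] (u : Torus d N → ℝ) (S : Set (Torus d N))
    (F G : Config d N → ℝ)
    (hF : ∀ η ξ : Config d N, (∀ z ∈ S, η z = ξ z) → F η = F ξ)
    (hG : ∀ η ξ : Config d N, (∀ z ∉ S, η z = ξ z) → G η = G ξ) :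
    ∑ η, F η * G η * bern u η = (∑ η, F η * bern u η) * ∑ η, G η * bern u η := by
  classical
  let e : Config d N × Config d N → Config d N × Config d N := fun p =>
    (fun z => if z ∈ S then p.1 z else p.2 z, fun z => if z ∈ S then p.2 z else p.1 z)
  have he : Function.Involutive e := by
    intro p
    ext z <;> by_cases hz : z ∈ S <;> simp [e, hz]
  have hν : ∀ p, bern u (e p).1 * bern u (e p).2 = bern u p.1 * bern u p.2 := by
    intro p
    simp only [bern, ← Finset.prod_mul_distrib]
    refine Finset.prod_congr rfl fun z _ => ?_
    by_cases hz : z ∈ S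
    · simp [e, hz]
    · simp only [e, hz, if_false]; exact mul_comm _ _
  have h1 : (∑ η, F η * bern u η) * ∑ η, G η * bern u η
      = ∑ p : Config d N × Config d N, F p.1 * G p.2 * (bern u p.1 * bern u p.2) := by
    rw [Finset.sum_mul_sum, Fintype.sum_prod_type]
    exact Finset.sum_congr rfl fun η _ => Finset.sum_congr rfl fun ξ _ => by ring
  have h2 : ∑ η, F η * G η * bern u η
      = ∑ p : Config d N × Config d N, F p.1 * G p.1 * (bern u p.1 * bern u p.2) := by
    rw [Fintype.sum_prod_type]
    refine Finset.sum_congr rfl fun η _ => ?_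
    simp only [← Finset.mul_sum, sum_bern, mul_one]
  rw [h1, h2]
  refine Fintype.sum_equiv he.toPerm _ _ fun p => ?_
  show _ = F (e p).1 * G (e p).2 * (bern u (e p).1 * bern u (e p).2)
  rw [hν, hF (e p).1 p.1 (fun z hz => by simp [e, hz]),
    hG (e p).2 p.1 (fun z hz => by simp [e, hz])]

theorem bern_indep_prod {d N : ℕ} [NeZero N] (u : Torus d N → ℝ) {ι : Type*}
    (B : ι → Set (Torus d N)) (F : ι → Config d N → ℝ)
    (hF : ∀ i, ∀ η ξ : Config d N, (∀ z ∈ B i, η z = ξ z) → F i η = F i ξ) (c : Finset ι)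
    (hB : ∀ i ∈ c, ∀ j ∈ c, i ≠ j → Disjoint (B i) (B j)) :
    ∑ η, (∏ i ∈ c, F i η) * bern u η = ∏ i ∈ c, ∑ η, F i η * bern u η := by
  classical
  induction c using Finset.induction_on with
  | empty => simp [sum_bern]
  | insert i c hi ih =>
    have ih' := ih fun j hj k hk => hB j (mem_insert_of_mem hj) k (mem_insert_of_mem hk)
    rw [Finset.prod_insert hi, ← ih', ← bern_indep u (B i)]
    · simp only [Finset.prod_insert hi]
    · exact hF i
    · intro η ξ h
      refine Finset.prod_congr rfl fun j hj => hF j η ξ fun z hz => h z fun hzi => ?_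
      have hij : i ≠ j := fun h => hi (h ▸ hj)
      exact Set.disjoint_left.1 (hB i (mem_insert_self i c) j (mem_insert_of_mem hj) hij) hzi hz

/-- The entropy inequality (Gibbs variational principle). -/
theorem entropy_ineq {d N : ℕ} [NeZero N] {u : Torus d N → ℝ} (hu : ∀ x, 0 ≤ u x ∧ u x ≤ 1)
    (f : Config d N → ℝ) (hf : ∀ η, 0 ≤ f η) (hf1 : ∑ η, f η * bern u η = 1)
    (g : Config d N → ℝ) {Z : ℝ} (hZ : 0 < Z) (hg : ∑ η, Real.exp (g η) * bern u η ≤ Z) :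
    ∑ η, g η * f η * bern u η ≤ (∑ η, f η * Real.log (f η) * bern u η) + Real.log Z := by
  have young : ∀ s t : ℝ, 0 ≤ s → s * t ≤ s * Real.log s - s + Real.exp t := by
    intro s t hs
    rcases hs.eq_or_lt with rfl | hs
    · simp [(Real.exp_pos t).le]
    · have h := Real.add_one_le_exp (t - Real.log s)
      rw [Real.exp_sub, Real.exp_log hs, le_div_iff₀ hs] at h
      nlinarith
  have h : ∑ η, f η * (g η - Real.log Z) * bern u η
      ≤ ∑ η, (f η * Real.log (f η) - f η + Real.exp (g η) / Z) * bern u η := by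
    refine Finset.sum_le_sum fun η _ => mul_le_mul_of_nonneg_right ?_ (bern_nonneg hu η)
    have := young (f η) (g η - Real.log Z) (hf η)
    rwa [Real.exp_sub, Real.exp_log hZ] at this
  have e1 : ∑ η, f η * (g η - Real.log Z) * bern u η
      = (∑ η, g η * f η * bern u η) - Real.log Z := by
    have : Real.log Z = ∑ η, Real.log Z * (f η * bern u η) := by rw [← Finset.mul_sum, hf1, mul_one]
    conv_rhs => rw [this, ← Finset.sum_sub_distrib]
    exact Finset.sum_congr rfl fun η _ => by ring
  have e2 : ∑ η, (f η * Real.log (f η) - f η + Real.exp (g η) / Z) * bern u η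
      = (∑ η, f η * Real.log (f η) * bern u η) - 1 + (∑ η, Real.exp (g η) * bern u η) / Z := by
    rw [← hf1, ← Finset.sum_sub_distrib, Finset.sum_div, ← Finset.sum_add_distrib]
    exact Finset.sum_congr rfl fun η _ => by ring
  have e3 : (∑ η, Real.exp (g η) * bern u η) / Z ≤ 1 := (div_le_one hZ).2 hg
  rw [e1, e2] at h
  linarith

theorem entropy_nonneg {d N : ℕ} [NeZero N] {u : Torus d N → ℝ} (hu : ∀ x, 0 ≤ u x ∧ u x ≤ 1)
    (f : Config d N → ℝ) (hf : ∀ η, 0 ≤ f η) (hf1 : ∑ η, f η * bern u η = 1) :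
    0 ≤ ∑ η, f η * Real.log (f η) * bern u η := by
  have := entropy_ineq hu f hf hf1 (fun _ => 0) one_pos (by simp [sum_bern])
  simpa using this

/-! ### Colouring of the torus and second moments of finite-range linear fields -/

/-- The point of the torus with natural number coordinates `w`. -/
def castN (d N : ℕ) (w : Fin d → ℕ) : Torus d N := fun j => (w j : ZMod N)

/-- A colouring of `ℤ/Nℤ` by `2 L` colours such that distinct points of the same colour have cyclic
distance at least `L`: the residue mod `L`, with a second palette for the incomplete last block. -/
def colr (N L : ℕ) (x : ZMod N) : ℕ := x.val % L + if x.val < N / L * L then 0 else L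

theorem colr_lt {N L : ℕ} (hL : 0 < L) (x : ZMod N) : colr N L x < 2 * L := by
  have := Nat.mod_lt x.val hL
  unfold colr
  split_ifs <;> omega

/-- Two points of the same colour which are brought together by shifts smaller than `L` coincide. -/
theorem colr_sep {N L : ℕ} [NeZero N] (x y : ZMod N) (a b : ℕ) (ha : a < L) (hb : b < L)
    (h : x + a = y + b) (hc : colr N L x = colr N L y) : x = y := by
  wlog hxy : y.val ≤ x.val generalizing x y a b
  · exact (this y x b a hb ha h.symm hc.symm (not_le.1 hxy).le).symm
  apply ZMod.val_injective N
  by_contra hne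
  have hx := x.val_lt
  have hy := y.val_lt
  have hL : 0 < L := by omega
  have hN := Nat.div_add_mod N L
  have hr := Nat.mod_lt N hL
  have hmx := Nat.mod_lt x.val hL
  have hmy := Nat.mod_lt y.val hL
  have hdx := Nat.div_add_mod x.val L
  have hdy := Nat.div_add_mod y.val L
  have h' : ((x.val + a : ℕ) : ZMod N) = ((y.val + b : ℕ) : ZMod N) := by
    push_cast
    rwa [ZMod.natCast_zmod_val, ZMod.natCast_zmod_val]
  rw [ZMod.natCast_eq_natCast_iff] at h'
  have hdvd : (N : ℤ) ∣ (y.val + b : ℕ) - (x.val + a : ℕ) := h'.dvd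
  -- the difference of the representatives is a nonzero multiple of `L`
  have hmod : x.val % L = y.val % L ∧ (x.val < N / L * L ↔ y.val < N / L * L) := by
    unfold colr at hc
    split_ifs at hc with h1 h2 h2 <;> constructor <;> omega
  obtain ⟨hm, hiff⟩ := hmod
  have hlt : y.val / L < x.val / L := by
    by_contra hcon
    have : x.val / L = y.val / L := le_antisymm (not_lt.1 hcon) (Nat.div_le_div_right hxy)
    rw [this, hm] at hdx
    omega
  have hge : L * (y.val / L) + L ≤ L * (x.val / L) := by
    have := Nat.mul_le_mul_left L (Nat.succ_le_of_lt hlt)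
    rwa [Nat.mul_succ] at this
  -- hence both lie among the complete blocks, where the cyclic distance is at least `L`
  have hxb : x.val < L * (N / L) := by
    rw [mul_comm]
    by_contra hcon
    have h1 : ¬ y.val < N / L * L := fun h => hcon (hiff.2 h)
    rw [mul_comm (N / L) L] at hcon h1
    omega
  have hxq : L * (x.val / L) + L ≤ L * (N / L) := by
    have h1 : x.val / L < N / L := by
      rw [Nat.div_lt_iff_lt_mul hL, mul_comm]; exact hxb
    have := Nat.mul_le_mul_left L (Nat.succ_le_of_lt h1)
    rwa [Nat.mul_succ] at this
  obtain ⟨k, hk⟩ := hdvd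
  push_cast at hk
  have hk0 : k = 0 ∨ k ≤ -1 ∨ 1 ≤ k := by omega
  rcases hk0 with rfl | hk1 | hk1
  · rw [mul_zero] at hk
    omega
  · have : (N : ℤ) * k ≤ -(N : ℤ) := by nlinarith
    omega
  · have : (N : ℤ) ≤ (N : ℤ) * k := by nlinarith
    omega

/-- Second moment bound under `f dν` for the finite-range linear fields
`h_x = Σ_z ψ (x - n - z) Y_z`, where `ψ` lives on a box of side `m`.  The torus is coloured by
`(2 m) ^ d` colours so that the `h_x` of a given colour are independent under `ν`; the entropy
inequality is applied to each colour. -/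
theorem sum_sq_bound {d N : ℕ} [NeZero N] {u : Torus d N → ℝ} (hu : ∀ x, 0 ≤ u x ∧ u x ≤ 1)
    {A : ℝ} (hA : 0 < A) (Y : Torus d N → Bool → ℝ) (hY : ∀ z b, |Y z b| ≤ A)
    (hm : ∀ z, u z * Y z true + (1 - u z) * Y z false = 0)
    (f : Config d N → ℝ) (hf : ∀ η, 0 ≤ f η) (hf1 : ∑ η, f η * bern u η = 1)
    (n : Torus d N) (ψ : Torus d N → ℝ) {m : ℕ} (hm0 : 0 < m)
    (hψ : ∀ v, ψ v ≠ 0 → ∃ w : Fin d → ℕ, (∀ i, w i < m) ∧ v = castN d N w)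
    {S : ℝ} (hS : 0 < S) (hψS : ∑ v, ψ v ^ 2 ≤ S) :
    ∑ η, (∑ x, (∑ z, ψ (x - n - z) * Y z (η z)) ^ 2) * f η * bern u η
      ≤ 4 * (S * A ^ 2) * ((2 * (m : ℝ)) ^ d * (∑ η, f η * Real.log (f η) * bern u η)
          + (N : ℝ) ^ d) := by
  classical
  set H := ∑ η, f η * Real.log (f η) * bern u η with hH
  set γ : ℝ := (4 * (S * A ^ 2))⁻¹ with hγ
  have hSA : 0 < 4 * (S * A ^ 2) := by positivity
  have hγ0 : 0 < γ := inv_pos.2 hSA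
  let col : Torus d N → (Fin d → Fin (2 * m)) := fun x i => ⟨colr N m (x i), colr_lt hm0 _⟩
  let h : Torus d N → Config d N → ℝ := fun x η => ∑ z, ψ (x - n - z) * Y z (η z)
  have hone : ∀ x, ∑ η, Real.exp (γ * h x η ^ 2) * bern u η ≤ Real.exp 1 := by
    intro x
    have hsum : ∑ z, ψ (x - n - z) ^ 2 = ∑ v, ψ v ^ 2 :=
      Fintype.sum_equiv (Equiv.subLeft (x - n)) _ _ fun z => rfl
    refine (exp_sq_linear hu hA Y hY hm (fun z => ψ (x - n - z)) hγ0.le ?_).trans ?_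
    · rw [hsum]
      have h1 : (∑ v, ψ v ^ 2) * A ^ 2 ≤ S * A ^ 2 :=
        mul_le_mul_of_nonneg_right hψS (sq_nonneg A)
      have h2 : 4 * γ * (S * A ^ 2) = 1 := by rw [hγ]; field_simp
      exact (mul_le_mul_of_nonneg_left h1 (by positivity)).trans h2.le
    · have h1 : √2 ≤ 2 := by
        rw [Real.sqrt_le_left (by norm_num)]; norm_num
      have := Real.add_one_le_exp 1
      linarith
  have hclass : ∀ c : Fin d → Fin (2 * m),
      ∑ η, (∑ x with col x = c, γ * h x η ^ 2) * f η * bern u η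
        ≤ H + ((univ.filter fun x => col x = c).card : ℝ) := by
    intro c
    have hprod : ∑ η, Real.exp (∑ x with col x = c, γ * h x η ^ 2) * bern u η
        ≤ Real.exp ((univ.filter fun x => col x = c).card : ℝ) := by
      have e := bern_indep_prod u (fun x => {z | ψ (x - n - z) ≠ 0})
        (fun x η => Real.exp (γ * h x η ^ 2)) (fun x η ξ hηξ => by
          have : h x η = h x ξ := by
            refine Finset.sum_congr rfl fun z _ => ?_
            by_cases hz : ψ (x - n - z) = 0
            · simp [hz]
            · rw [hηξ z hz]
          simp only [this]) (univ.filter fun x => col x = c) (by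
          -- fields of the same colour see disjoint sets of sites
          intro x hx y hy hxy
          rw [Set.disjoint_left]
          intro z hzx hzy
          obtain ⟨w, hw, hwx⟩ := hψ _ hzx
          obtain ⟨w', hw', hwy⟩ := hψ _ hzy
          apply hxy
          funext i
          have hx' := congrFun ((mem_filter.1 hx).2.trans (mem_filter.1 hy).2.symm) i
          have hx'' : colr N m (x i) = colr N m (y i) := congrArg Fin.val hx'
          refine colr_sep (x i) (y i) (w' i) (w i) (hw' i) (hw i) ?_ hx''
          have h1 := congrFun hwx i
          have h2 := congrFun hwy i
          simp only [Pi.sub_apply, castN] at h1 h2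
          rw [← h1, ← h2]; ring)
      simp only [Real.exp_sum]
      rw [e, show ((univ.filter fun x => col x = c).card : ℝ)
        = ∑ x with col x = c, (1 : ℝ) by simp, Real.exp_sum]
      exact Finset.prod_le_prod (fun x _ => Finset.sum_nonneg fun η _ =>
        mul_nonneg (Real.exp_pos _).le (bern_nonneg hu η)) fun x _ => hone x
    have := entropy_ineq hu f hf hf1 _ (Real.exp_pos _) hprod
    rwa [Real.log_exp] at this
  have hall : ∑ η, (∑ x, γ * h x η ^ 2) * f η * bern u η ≤ (2 * (m : ℝ)) ^ d * H + (N : ℝ) ^ d := by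
    have e1 : ∑ η, (∑ x, γ * h x η ^ 2) * f η * bern u η
        = ∑ c, ∑ η, (∑ x with col x = c, γ * h x η ^ 2) * f η * bern u η := by
      rw [Finset.sum_comm]
      refine Finset.sum_congr rfl fun η _ => ?_
      rw [← Finset.sum_mul, ← Finset.sum_mul, Finset.sum_fiberwise]
    have e2 : ∑ c, (H + ((univ.filter fun x => col x = c).card : ℝ))
        = (2 * (m : ℝ)) ^ d * H + (N : ℝ) ^ d := by
      rw [Finset.sum_add_distrib, ← Nat.cast_sum,
        ← Finset.card_eq_sum_card_fiberwise (fun x _ => mem_univ (col x))]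
      simp [ZMod.card]
    rw [e1, ← e2]
    exact Finset.sum_le_sum fun c _ => hclass c
  have e3 : ∑ η, (∑ x, γ * h x η ^ 2) * f η * bern u η
      = γ * ∑ η, (∑ x, h x η ^ 2) * f η * bern u η := by
    rw [Finset.mul_sum]
    refine Finset.sum_congr rfl fun η _ => ?_
    rw [← Finset.mul_sum]; ring
  rw [e3, hγ, inv_mul_le_iff₀ hSA] at hall
  exact hall

/-! ### Flows from the unit mass to uniform measures on cubes -/

/-- The box `∏ i, [0, s i)` in `ℕ^d`. -/
def boxF {d : ℕ} (s : Fin d → ℕ) : Finset (Fin d → ℕ) := Fintype.piFinset fun i => range (s i)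

theorem mem_boxF {d : ℕ} {s w : Fin d → ℕ} : w ∈ boxF s ↔ ∀ i, w i < s i := by
  simp [boxF]

theorem card_boxF {d : ℕ} (s : Fin d → ℕ) : (boxF s).card = ∏ i, s i := by
  simp [boxF]

/-- The average of `g` over the image in the torus of the box with sides `s`. -/
noncomputable def bavg {d N : ℕ} (s : Fin d → ℕ) (g : Torus d N → ℝ) : ℝ :=
  (∏ i, (s i : ℝ))⁻¹ * ∑ w ∈ boxF s, g (castN d N w)

/-- The flow `ψ` tested against `g`: the sum over bonds of `ψ` times minus the gradient of `g`. -/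
noncomputable def flux {d N : ℕ} [NeZero N] (ψ : Fin d → EuclideanSpace ℝ (Torus d N))
    (g : Torus d N → ℝ) : ℝ :=
  ∑ j, ∑ v, ψ j v * (g v - g (v + uvec d N j))

/-- A function on the torus supported in the image of the box `[0, m)^d`. -/
def SuppIn {d N : ℕ} (m : ℕ) (φ : Torus d N → ℝ) : Prop :=
  ∀ v, φ v ≠ 0 → ∃ w : Fin d → ℕ, (∀ i, w i < m) ∧ v = castN d N w

/-- Summation by parts behind the elementary flow which lengthens side `j` of a box by one. -/
theorem box_step {d : ℕ} (s : Fin d → ℕ) (j : Fin d) (g : (Fin d → ℕ) → ℝ) :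
    ((s j : ℝ) + 1) * ∑ w ∈ boxF s, g w
        - s j * ∑ w ∈ boxF (Function.update s j (s j + 1)), g w
      = ∑ w ∈ boxF s, ((w j : ℝ) + 1) * (g w - g (Function.update w j (w j + 1))) := by
  classical
  set s' := Function.update s j (s j + 1) with hs'
  have hsplit : ∀ F : (Fin d → ℕ) → ℝ, ∑ w ∈ boxF s', F w
      = ∑ w ∈ boxF s, F w + ∑ w ∈ boxF s' with w j = s j, F w := by
    intro F
    rw [← Finset.sum_filter_add_sum_filter_not (boxF s') (fun w => w j = s j), add_comm]
    congr 1
    refine Finset.sum_congr ?_ fun _ _ => rfl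
    ext w
    simp only [mem_filter, mem_boxF, hs']
    constructor
    · rintro ⟨h, hj⟩ i
      have := h i
      by_cases hi : i = j
      · subst hi; simp at this; omega
      · simpa [hi] using this
    · intro h
      refine ⟨fun i => ?_, (h j).ne⟩
      by_cases hi : i = j
      · subst hi; simpa using (h i).le
      · simpa [hi] using h i
  have hshift : ∑ w ∈ boxF s, ((w j : ℝ) + 1) * g (Function.update w j (w j + 1))
      = ∑ w ∈ boxF s', (w j : ℝ) * g w := by
    rw [← Finset.sum_filter_of_ne (s := boxF s') (p := fun w => w j ≠ 0)]
    · refine Finset.sum_nbij' (fun w => Function.update w j (w j + 1))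
        (fun w => Function.update w j (w j - 1)) ?_ ?_ ?_ ?_ ?_
      · intro w hw
        rw [mem_boxF] at hw
        simp only [mem_filter, mem_boxF, hs']
        refine ⟨fun i => ?_, by simp⟩
        by_cases hi : i = j
        · subst hi; simpa using hw i
        · simpa [hi] using hw i
      · intro w hw
        simp only [mem_filter, mem_boxF, hs'] at hw
        rw [mem_boxF]
        intro i
        have := hw.1 i
        by_cases hi : i = j
        · subst hi; simp at this ⊢; omega
        · simpa [hi] using this
      · intro w _
        simp
      · intro w hw
        have := (mem_filter.1 hw).2
        have e : w j - 1 + 1 = w j := by omega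
        simp [e]
      · intro w _
        simp
    · intro w _ hw h
      simp [h] at hw
  have hslab : ∑ w ∈ boxF s' with w j = s j, (w j : ℝ) * g w
      = s j * ∑ w ∈ boxF s' with w j = s j, g w := by
    rw [Finset.mul_sum]
    exact Finset.sum_congr rfl fun w hw => by rw [(mem_filter.1 hw).2]
  simp only [mul_sub, Finset.sum_sub_distrib]
  rw [hshift, hsplit g, hsplit fun w => (w j : ℝ) * g w, hslab]
  simp only [add_mul, one_mul, Finset.sum_add_distrib]
  ring

theorem castN_update {d N : ℕ} (w : Fin d → ℕ) (j : Fin d) :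
    castN d N (Function.update w j (w j + 1)) = castN d N w + uvec d N j := by
  funext i
  by_cases hi : i = j
  · subst hi; simp [castN, uvec]
  · simp [castN, uvec, hi]

theorem castN_inj {d N : ℕ} {w w' : Fin d → ℕ} (hw : ∀ i, w i < N) (hw' : ∀ i, w' i < N)
    (h : castN d N w = castN d N w') : w = w' := by
  funext i
  have h1 : ((w i : ℕ) : ZMod N) = (w' i : ℕ) := congrFun h i
  rw [ZMod.natCast_eq_natCast_iff'] at h1
  rwa [Nat.mod_eq_of_lt (hw i), Nat.mod_eq_of_lt (hw' i)] at h1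

/-- Lengthening one side of a box by one: the flow is at most the inverse volume on each bond of
the box, so its squared `ℓ²` norm is at most the inverse volume. -/
theorem flow_step {d N : ℕ} [NeZero N] (s : Fin d → ℕ) (hs : ∀ i, 0 < s i) (hsN : ∀ i, s i ≤ N)
    (j : Fin d) {m : ℕ} (hm : ∀ i, s i ≤ m) :
    ∃ φ : EuclideanSpace ℝ (Torus d N), SuppIn m φ ∧ ‖φ‖ ^ 2 ≤ (∏ i, (s i : ℝ))⁻¹ ∧
      ∀ g : Torus d N → ℝ, bavg s g - bavg (Function.update s j (s j + 1)) g
        = ∑ v, φ v * (g v - g (v + uvec d N j)) := by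
  classical
  set P : ℝ := ∏ i, (s i : ℝ) with hP
  have hP0 : 0 < P := Finset.prod_pos fun i _ => Nat.cast_pos.2 (hs i)
  -- the flow through the bond from `w` in direction `j` increases linearly along the side `j`
  let c : (Fin d → ℕ) → ℝ := fun w => P⁻¹ * (((w j : ℝ) + 1) / (s j + 1))
  have hsj : (0 : ℝ) < (s j : ℝ) + 1 := by positivity
  let φ : Torus d N → ℝ := fun v => ∑ w ∈ boxF s, if castN d N w = v then c w else 0
  have hsum : ∀ G : Torus d N → ℝ, ∑ v, φ v * G v = ∑ w ∈ boxF s, c w * G (castN d N w) := by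
    intro G
    simp only [φ, Finset.sum_mul]
    rw [Finset.sum_comm]
    refine Finset.sum_congr rfl fun w _ => ?_
    simp
  have hφ : ∀ w ∈ boxF s, φ (castN d N w) = c w := by
    intro w hw
    have hinj : ∀ w' ∈ boxF s, castN d N w' = castN d N w → w' = w := fun w' hw' h =>
      castN_inj (fun i => (mem_boxF.1 hw' i).trans_le (hsN i))
        (fun i => (mem_boxF.1 hw i).trans_le (hsN i)) h
    show (∑ w' ∈ boxF s, if castN d N w' = castN d N w then c w' else 0) = c w
    rw [Finset.sum_eq_single w]
    · simp
    · intro w' hw' hne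
      rw [if_neg fun h => hne (hinj w' hw' h)]
    · exact fun h => absurd hw h
  have hc : ∀ w ∈ boxF s, c w * c w ≤ P⁻¹ * P⁻¹ := by
    intro w hw
    have h1 : ((w j : ℝ) + 1) / (s j + 1) ≤ 1 := by
      rw [div_le_one hsj]
      have : (w j : ℝ) ≤ s j := by exact_mod_cast (mem_boxF.1 hw j).le
      linarith
    have h2 : c w ≤ P⁻¹ := mul_le_of_le_one_right (inv_pos.2 hP0).le h1
    have h3 : 0 ≤ c w := by positivity
    exact mul_le_mul h2 h2 h3 (inv_pos.2 hP0).le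
  refine ⟨WithLp.toLp 2 φ, ?_, ?_, ?_⟩
  · intro v hv
    obtain ⟨w, hw, hne⟩ := Finset.exists_ne_zero_of_sum_ne_zero
      (show (∑ w ∈ boxF s, if castN d N w = v then c w else 0) ≠ 0 from hv)
    refine ⟨w, fun i => (mem_boxF.1 hw i).trans_le (hm i), ?_⟩
    by_contra h
    exact hne (if_neg fun h' => h h'.symm)
  · rw [EuclideanSpace.norm_sq_eq]
    have e : ∑ v, ‖φ v‖ ^ 2 = ∑ v, φ v * φ v :=
      Finset.sum_congr rfl fun v _ => by rw [Real.norm_eq_abs, sq_abs, sq]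
    show ∑ v, ‖φ v‖ ^ 2 ≤ _
    rw [e, hsum φ]
    calc ∑ w ∈ boxF s, c w * φ (castN d N w) = ∑ w ∈ boxF s, c w * c w :=
          Finset.sum_congr rfl fun w hw => by rw [hφ w hw]
      _ ≤ ∑ w ∈ boxF s, P⁻¹ * P⁻¹ := Finset.sum_le_sum hc
      _ = P⁻¹ := by
          rw [Finset.sum_const, card_boxF, nsmul_eq_mul, Nat.cast_prod, ← hP]
          field_simp
  · intro g
    show _ = ∑ v, φ v * (g v - g (v + uvec d N j))
    rw [hsum fun v => g v - g (v + uvec d N j)]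
    have hb := box_step s j fun w => g (castN d N w)
    simp only [castN_update] at hb
    have hs0 : (0 : ℝ) < s j := Nat.cast_pos.2 (hs j)
    have hP' : ∏ i, ((Function.update s j (s j + 1) i : ℕ) : ℝ) = P * ((s j + 1) / s j) := by
      have h1 := Finset.prod_update_of_mem (Finset.mem_univ j) (fun i => (s i : ℝ)) ((s j : ℝ) + 1)
      have h2 := Finset.mul_prod_erase univ (fun i => (s i : ℝ)) (Finset.mem_univ j)
      have h3 : ∏ i, ((Function.update s j (s j + 1) i : ℕ) : ℝ)
          = ∏ i, Function.update (fun i => (s i : ℝ)) j ((s j : ℝ) + 1) i := by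
        refine Finset.prod_congr rfl fun i _ => ?_
        by_cases hi : i = j
        · subst hi; simp
        · simp [hi]
      rw [h3, h1, hP, ← h2, Finset.sdiff_singleton_eq_erase]
      field_simp
    unfold bavg
    rw [hP', ← hP]
    have e : ∑ w ∈ boxF s, c w * (g (castN d N w) - g (castN d N w + uvec d N j))
        = P⁻¹ * (((s j : ℝ) + 1)⁻¹ * ∑ w ∈ boxF s, ((w j : ℝ) + 1) *
            (g (castN d N w) - g (castN d N w + uvec d N j))) := by
      rw [Finset.mul_sum, Finset.mul_sum]
      refine Finset.sum_congr rfl fun w _ => ?_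
      simp only [c]
      ring
    rw [e, ← hb]
    field_simp

/-- There is a flow supported in the box of side `m`, of `ℓ²` norm at most `R`, which carries the
functional `μ` to the functional `μ'` (both are averages of a test function). -/
def HasFlow {d N : ℕ} [NeZero N] (m : ℕ) (R : ℝ) (μ μ' : (Torus d N → ℝ) → ℝ) : Prop :=
  ∃ ψ : Fin d → EuclideanSpace ℝ (Torus d N), (∀ j, SuppIn m (ψ j)) ∧ (∀ j, ‖ψ j‖ ≤ R) ∧
    ∀ g, μ g - μ' g = flux ψ g

theorem SuppIn.add {d N : ℕ} {m : ℕ} {φ φ' : Torus d N → ℝ} (h : SuppIn m φ) (h' : SuppIn m φ') :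
    SuppIn m (φ + φ') := by
  intro v hv
  by_cases h0 : φ v = 0
  · exact h' v fun h1 => hv (by simp [h0, h1])
  · exact h v h0

theorem SuppIn.mono {d N : ℕ} {m m' : ℕ} {φ : Torus d N → ℝ} (h : SuppIn m φ) (hm : m ≤ m') :
    SuppIn m' φ := fun v hv => by
  obtain ⟨w, hw, e⟩ := h v hv
  exact ⟨w, fun i => (hw i).trans_le hm, e⟩

theorem HasFlow.trans {d N : ℕ} [NeZero N] {m : ℕ} {R R' : ℝ} {μ μ' μ'' : (Torus d N → ℝ) → ℝ}
    (h : HasFlow m R μ μ') (h' : HasFlow m R' μ' μ'') : HasFlow m (R + R') μ μ'' := by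
  obtain ⟨ψ, h1, h2, h3⟩ := h
  obtain ⟨ψ', h1', h2', h3'⟩ := h'
  refine ⟨fun j => ψ j + ψ' j, fun j => (h1 j).add (h1' j),
    fun j => (norm_add_le _ _).trans (add_le_add (h2 j) (h2' j)), fun g => ?_⟩
  have : μ g - μ'' g = (μ g - μ' g) + (μ' g - μ'' g) := by ring
  rw [this, h3, h3', flux, flux, flux, ← Finset.sum_add_distrib]
  refine Finset.sum_congr rfl fun j _ => ?_
  rw [← Finset.sum_add_distrib]
  exact Finset.sum_congr rfl fun v _ => by simp only [PiLp.add_apply]; ring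

/-- From the cube of side `k` to the cube of side `k + 1`, one coordinate at a time.  Each of the
steps costs at most `k ^ (-d / 2) ≤ 1 / k` since `d ≥ 2`. -/
theorem flow_round {d N : ℕ} [NeZero N] (hd : 2 ≤ d) {k m : ℕ} (hk : 0 < k) (hkm : k + 1 ≤ m)
    (hmN : m ≤ N) (T : Finset (Fin d)) :
    HasFlow (N := N) m (T.card * (1 / (k : ℝ))) (bavg fun _ : Fin d => k)
      (bavg fun i => if i ∈ T then k + 1 else k) := by
  classical
  induction T using Finset.induction_on with
  | empty =>
    refine ⟨fun _ => 0, fun j v hv => absurd rfl hv, fun j => by simp, fun g => ?_⟩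
    simp [flux]
  | insert j T hj ih =>
    set s : Fin d → ℕ := fun i => if i ∈ T then k + 1 else k with hs
    have hs1 : ∀ i, k ≤ s i := fun i => by simp only [hs]; split_ifs <;> omega
    have hs2 : ∀ i, s i ≤ m := fun i => by simp only [hs]; split_ifs <;> omega
    obtain ⟨φ, h1, h2, h3⟩ := flow_step (N := N) s (fun i => hk.trans_le (hs1 i))
      (fun i => (hs2 i).trans hmN) j hs2
    have hup : Function.update s j (s j + 1) = fun i => if i ∈ insert j T then k + 1 else k := by
      funext i
      by_cases hi : i = j
      · subst hi; simp [hs, hj]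
      · simp [hs, hi]
    rw [hup] at h3
    have hk' : (1 : ℝ) ≤ k := by exact_mod_cast hk
    have hnorm : ‖φ‖ ≤ 1 / (k : ℝ) := by
      refine (sq_le_sq₀ (norm_nonneg _) (by positivity)).1 (h2.trans ?_)
      have hp : (k : ℝ) ^ 2 ≤ ∏ i, (s i : ℝ) := by
        calc (k : ℝ) ^ 2 ≤ (k : ℝ) ^ d := pow_le_pow_right₀ hk' hd
          _ = ∏ _i : Fin d, (k : ℝ) := by simp
          _ ≤ ∏ i, (s i : ℝ) := Finset.prod_le_prod (fun _ _ => by positivity)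
              fun i _ => by exact_mod_cast hs1 i
      rw [div_pow, one_pow, ← one_div]
      exact one_div_le_one_div_of_le (by positivity) hp
    have hflow : HasFlow (N := N) m (1 / (k : ℝ)) (bavg s)
        (bavg fun i => if i ∈ insert j T then k + 1 else k) := by
      refine ⟨fun i => if i = j then φ else 0, fun i => ?_, fun i => ?_, fun g => ?_⟩
      · dsimp only
        split_ifs
        · exact h1
        · exact fun v hv => absurd rfl hv
      · dsimp only
        split_ifs
        · exact hnorm
        · simp
      · rw [h3, flux, Finset.sum_eq_single j]
        · simp
        · intro i _ hi
          simp [hi]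
        · simp
    have := ih.trans hflow
    rw [Finset.card_insert_of_notMem hj]
    push_cast
    rwa [add_mul, one_mul]

/-- A flow from the unit mass at the origin to the uniform measure on the cube of side `n + 1`, with
`ℓ²` norm of order at most `log n`. -/
theorem flow_cube {d N : ℕ} [NeZero N] (hd : 2 ≤ d) (n : ℕ) {m : ℕ} (hm : n + 1 ≤ m)
    (hmN : m ≤ N) :
    HasFlow (N := N) m (d * ((harmonic n : ℚ) : ℝ)) (fun g : Torus d N → ℝ => g 0)
      (bavg fun _ : Fin d => n + 1) := by
  induction n with
  | zero =>
    refine ⟨fun _ => 0, fun j v hv => absurd rfl hv, fun j => by simp, fun g => ?_⟩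
    have h1 : boxF (fun _ : Fin d => 0 + 1) = {fun _ => 0} := by
      ext w
      rw [mem_boxF, mem_singleton, funext_iff]
      exact forall_congr' fun i => by omega
    have h2 : castN d N (fun _ => 0) = 0 := by funext i; simp [castN]
    simp [bavg, flux, h1, h2]
  | succ k ih =>
    have h1 := flow_round (N := N) hd (Nat.succ_pos k) hm hmN univ
    have h2 := (ih (by omega)).trans h1
    simp only [mem_univ, if_true, Finset.card_univ, Fintype.card_fin] at h2
    have e : (d : ℝ) * ((harmonic (k + 1) : ℚ) : ℝ)
        = d * ((harmonic k : ℚ) : ℝ) + d * (1 / ((k.succ : ℕ) : ℝ)) := by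
      rw [harmonic_succ]
      push_cast
      ring
    rw [e]
    exact h2

/-- The flow obtained by spreading `ψ` over the cube of side `ℓ`: the average of its translates. -/
noncomputable def spread {d N : ℕ} (ℓ : ℕ) (ψ : EuclideanSpace ℝ (Torus d N)) :
    EuclideanSpace ℝ (Torus d N) :=
  WithLp.toLp 2 fun v => ((ℓ : ℝ) ^ d)⁻¹ * ∑ y ∈ boxF (fun _ : Fin d => ℓ), ψ (v - castN d N y)

theorem norm_translate {d N : ℕ} [NeZero N] (ψ : EuclideanSpace ℝ (Torus d N)) (y : Torus d N) :
    ‖(WithLp.toLp 2 fun v => ψ (v - y) : EuclideanSpace ℝ (Torus d N))‖ = ‖ψ‖ := by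
  rw [EuclideanSpace.norm_eq, EuclideanSpace.norm_eq]
  congr 1
  exact Fintype.sum_equiv (Equiv.subRight y) _ _ fun v => rfl

theorem norm_spread {d N : ℕ} [NeZero N] {ℓ : ℕ} (hℓ : 0 < ℓ) (ψ : EuclideanSpace ℝ (Torus d N)) :
    ‖spread ℓ ψ‖ ≤ ‖ψ‖ := by
  have hp : (0 : ℝ) < (ℓ : ℝ) ^ d := by positivity
  have e : spread ℓ ψ = ((ℓ : ℝ) ^ d)⁻¹ • ∑ y ∈ boxF (fun _ : Fin d => ℓ),
      (WithLp.toLp 2 fun v => ψ (v - castN d N y) : EuclideanSpace ℝ (Torus d N)) := by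
    ext v
    simp [spread]
  rw [e, norm_smul, Real.norm_of_nonneg (inv_pos.2 hp).le, inv_mul_le_iff₀ hp]
  refine (norm_sum_le _ _).trans ?_
  simp only [norm_translate, Finset.sum_const, card_boxF]
  simp

/-- Two averagings in a row: a flow from the unit mass at the origin to the law of the sum of two
independent uniform points of the cube of side `n + 1`. -/
theorem flow_double {d N : ℕ} [NeZero N] (hd : 2 ≤ d) (n : ℕ) (hN : n + 1 ≤ N) :
    HasFlow (N := N) (2 * (n + 1)) (2 * (d * ((harmonic n : ℚ) : ℝ))) (fun g : Torus d N → ℝ => g 0)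
      (fun g => bavg (fun _ : Fin d => n + 1) fun y => bavg (fun _ : Fin d => n + 1)
        fun y' => g (y + y')) := by
  obtain ⟨ψ, h1, h2, h3⟩ := flow_cube (N := N) hd n le_rfl hN
  have hA : HasFlow (N := N) (2 * (n + 1)) (d * ((harmonic n : ℚ) : ℝ))
      (fun g : Torus d N → ℝ => g 0) (bavg fun _ : Fin d => n + 1) :=
    ⟨ψ, fun j => (h1 j).mono (by omega), h2, h3⟩
  have hB : HasFlow (N := N) (2 * (n + 1)) (d * ((harmonic n : ℚ) : ℝ))
      (bavg fun _ : Fin d => n + 1)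
      (fun g => bavg (fun _ : Fin d => n + 1) fun y => bavg (fun _ : Fin d => n + 1)
        fun y' => g (y + y')) := by
    refine ⟨fun j => spread (n + 1) (ψ j), fun j v hv => ?_,
      fun j => (norm_spread n.succ_pos _).trans (h2 j), fun g => ?_⟩
    · have hv' : ∑ y ∈ boxF (fun _ : Fin d => n + 1), ψ j (v - castN d N y) ≠ 0 := fun h =>
        hv (show _ * _ = (0 : ℝ) by rw [h, mul_zero])
      obtain ⟨y, hy, hne⟩ := Finset.exists_ne_zero_of_sum_ne_zero hv'
      obtain ⟨w, hw, e⟩ := h1 j _ hne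
      refine ⟨fun i => w i + y i, fun i => ?_, ?_⟩
      · have := hw i
        have := mem_boxF.1 hy i
        dsimp only at this ⊢
        omega
      · rw [sub_eq_iff_eq_add] at e
        rw [e]
        funext i
        simp [castN]
    · have e1 : ∀ y : Torus d N, g y - bavg (fun _ : Fin d => n + 1) (fun y' => g (y + y'))
          = flux ψ fun v => g (y + v) := by
        intro y
        rw [← h3]
        simp
      have e2 : bavg (fun _ : Fin d => n + 1) g
          - bavg (fun _ : Fin d => n + 1) (fun y => bavg (fun _ : Fin d => n + 1)
            fun y' => g (y + y'))
          = bavg (fun _ : Fin d => n + 1) (fun y => flux ψ fun v => g (y + v)) := by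
        simp only [← e1]
        unfold bavg
        rw [← mul_sub, ← Finset.sum_sub_distrib]
      rw [e2]
      unfold bavg flux spread
      have e3 : (∏ _i : Fin d, (((n + 1 : ℕ) : ℝ))) = ((n + 1 : ℕ) : ℝ) ^ d := by simp
      rw [e3, Finset.mul_sum]
      simp only [Finset.mul_sum, Finset.sum_mul]
      rw [Finset.sum_comm]
      refine Finset.sum_congr rfl fun j _ => ?_
      rw [Finset.sum_comm' (t' := univ) (s' := fun _ => boxF fun _ : Fin d => n + 1) (by simp)]
      conv_rhs => rw [Finset.sum_comm]
      conv_lhs => rw [Finset.sum_comm]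
      refine Finset.sum_congr rfl fun y _ => ?_
      refine Fintype.sum_equiv (Equiv.addLeft (castN d N y)) _ _ fun v => ?_
      simp only [Equiv.coe_addLeft, add_sub_cancel_left, add_assoc]
      ring
  have := hA.trans hB
  rwa [← two_mul] at this

/-! ### Exchanging two occupation variables: integration by parts -/

theorem swapC_involutive {d N : ℕ} (x y : Torus d N) :
    Function.Involutive (swapC x y : Config d N → Config d N) := by
  intro η
  funext z
  simp [swapC]

theorem sum_swapC {d N : ℕ} [NeZero N] (x y : Torus d N) (F : Config d N → ℝ) :
    ∑ η, F (swapC x y η) = ∑ η, F η :=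
  Fintype.sum_equiv (swapC_involutive x y).toPerm _ _ fun _ => rfl

/-- The two single-site weights at `x` and `y` factor out of `bern u`, and the remaining factor does
not see the exchange of `x` and `y`. -/
theorem bern_factor {d N : ℕ} [NeZero N] {u : Torus d N → ℝ} (hu : ∀ x, 0 ≤ u x ∧ u x ≤ 1)
    {x y : Torus d N} (hxy : x ≠ y) (η : Config d N) :
    ∃ R : ℝ, 0 ≤ R ∧
      bern u η = (if η x then u x else 1 - u x) * (if η y then u y else 1 - u y) * R ∧
      bern u (swapC x y η)
        = (if η y then u x else 1 - u x) * (if η x then u y else 1 - u y) * R := by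
  classical
  have hsplit : ∀ ξ : Config d N, bern u ξ
      = (if ξ x then u x else 1 - u x) * (if ξ y then u y else 1 - u y)
        * ∏ z ∈ (univ.erase x).erase y, (if ξ z then u z else 1 - u z) := by
    intro ξ
    rw [bern, ← Finset.mul_prod_erase univ _ (mem_univ x),
      ← Finset.mul_prod_erase (univ.erase x) _ (mem_erase.2 ⟨hxy.symm, mem_univ y⟩), mul_assoc]
  refine ⟨∏ z ∈ (univ.erase x).erase y, (if η z then u z else 1 - u z), ?_, hsplit η, ?_⟩
  · refine Finset.prod_nonneg fun z _ => ?_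
    have := hu z
    split_ifs <;> linarith
  · rw [hsplit]
    congr 1
    · simp [swapC]
    · refine Finset.prod_congr rfl fun z hz => ?_
      have h1 : z ≠ y := (mem_erase.1 hz).1
      have h2 : z ≠ x := (mem_erase.1 (mem_erase.1 hz).2).1
      simp [swapC, Equiv.swap_apply_of_ne_of_ne h2 h1]

theorem chi_lower {c p : ℝ} (hc : 0 < c) (h : c ≤ p ∧ p ≤ 1 - c) : c ^ 2 ≤ chi p := by
  unfold chi
  nlinarith [h.1, h.2]

theorem abs_omg_le {d N : ℕ} {u : Torus d N → ℝ} {c : ℝ} (hc : 0 < c)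
    (hu : ∀ x, c ≤ u x ∧ u x ≤ 1 - c) (x : Torus d N) (η : Config d N) :
    |omg u x η| ≤ (c ^ 2)⁻¹ := by
  have h := hu x
  have h1 := chi_lower hc h
  have hc2 : 0 < c ^ 2 := by positivity
  have h2 : |bval (η x) - u x| ≤ 1 := by
    rw [abs_le]
    cases η x <;> simp only [bval, if_true, Bool.false_eq_true, if_false] <;>
      constructor <;> linarith
  unfold omg
  rw [abs_div, abs_of_pos (hc2.trans_le h1), ← one_div]
  exact div_le_div₀ zero_le_one h2 hc2 h1

theorem bern_swapC_le {d N : ℕ} [NeZero N] {u : Torus d N → ℝ} {c : ℝ} (hc : 0 < c)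
    (hu : ∀ x, c ≤ u x ∧ u x ≤ 1 - c) {x y : Torus d N} (hxy : x ≠ y) (η : Config d N) :
    bern u (swapC x y η) ≤ (c ^ 2)⁻¹ * bern u η := by
  obtain ⟨R, hR, h1, h2⟩ := bern_factor (u := u) (fun z => ⟨by linarith [hu z], by linarith [hu z]⟩)
    hxy η
  have hx := hu x
  have hy := hu y
  have hc2 : 0 < c ^ 2 := by positivity
  rw [le_inv_mul_iff₀ hc2, h1, h2, ← mul_assoc]
  refine mul_le_mul_of_nonneg_right ?_ hR
  have key : ∀ p q p' q' : ℝ, 0 ≤ p → p ≤ 1 → 0 ≤ q → q ≤ 1 → c ≤ p' → c ≤ q' →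
      c ^ 2 * (p * q) ≤ p' * q' := by
    intro p q p' q' h1 h2 h3 h4 h5 h6
    have a1 : p * q ≤ 1 := mul_le_one₀ h2 h3 h4
    have a2 : c * c ≤ p' * q' := mul_le_mul h5 h6 hc.le (hc.le.trans h5)
    nlinarith
  apply key <;> split_ifs <;> linarith

/-- The function `(ω_x - ω_y) ν` is antisymmetric under the exchange of `x` and `y`, up to an error
of the order of `u_x - u_y`. -/
theorem antisymm_defect {d N : ℕ} [NeZero N] {u : Torus d N → ℝ} {c : ℝ} (hc : 0 < c)
    (hu : ∀ x, c ≤ u x ∧ u x ≤ 1 - c) {x y : Torus d N} (hxy : x ≠ y) (η : Config d N) :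
    |(omg u x η - omg u y η) * bern u η
        + (omg u x (swapC x y η) - omg u y (swapC x y η)) * bern u (swapC x y η)|
      ≤ 2 * (c ^ 2)⁻¹ * |u x - u y| * bern u η := by
  obtain ⟨R, hR, h1, h2⟩ := bern_factor (u := u) (fun z => ⟨by linarith [hu z], by linarith [hu z]⟩)
    hxy η
  have hx := hu x
  have hy := hu y
  have hc2 : 0 < c ^ 2 := by positivity
  have hx0 : u x ≠ 0 := by linarith
  have hy0 : u y ≠ 0 := by linarith
  have hx1 : 1 - u x ≠ 0 := by linarith
  have hy1 : 1 - u y ≠ 0 := by linarith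
  have hsx : swapC x y η x = η y := by simp [swapC]
  have hsy : swapC x y η y = η x := by simp [swapC]
  have hprod : ∀ p q : ℝ, c ≤ p → c ≤ q → c ^ 2 ≤ p * q := fun p q hp hq => by
    rw [sq]; exact mul_le_mul hp hq hc.le (hc.le.trans hp)
  -- each of the four values of `(η x, η y)` produces exactly `± 2 (u x - u y) R`
  have hfin : ∀ b : ℝ, c ^ 2 ≤ b →
      |2 * (u x - u y) * R| ≤ 2 * (c ^ 2)⁻¹ * |u x - u y| * (b * R) := by
    intro b hb
    rw [abs_mul, abs_mul, abs_of_nonneg hR, abs_two]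
    have h1 : 1 ≤ (c ^ 2)⁻¹ * b := by rwa [le_inv_mul_iff₀ hc2, mul_one]
    have h2 : 0 ≤ 2 * |u x - u y| * R := by positivity
    nlinarith [mul_le_mul_of_nonneg_left h1 h2]
  have hfin1 : ∀ b : ℝ, |2 * (u x - u y) * R| ≤ 2 * (c ^ 2)⁻¹ * |u x - u y| * (b * R) →
      |-(2 * (u x - u y) * R)| ≤ 2 * (c ^ 2)⁻¹ * |u x - u y| * (b * R) := fun b h => by
    rwa [abs_neg]
  simp only [omg, hsx, hsy, h1, h2, bval, chi]
  cases η x <;> cases η y <;> simp only [if_true, Bool.false_eq_true, if_false]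
  · have e : ((0 - u x) / (u x * (1 - u x)) - (0 - u y) / (u y * (1 - u y)))
          * ((1 - u x) * (1 - u y) * R)
        + ((0 - u x) / (u x * (1 - u x)) - (0 - u y) / (u y * (1 - u y)))
          * ((1 - u x) * (1 - u y) * R) = -(2 * (u x - u y) * R) := by
      field_simp; ring
    rw [e]
    exact hfin1 _ (hfin _ (hprod _ _ (by linarith) (by linarith)))
  · have e : ((0 - u x) / (u x * (1 - u x)) - (1 - u y) / (u y * (1 - u y)))
          * ((1 - u x) * u y * R)
        + ((1 - u x) / (u x * (1 - u x)) - (0 - u y) / (u y * (1 - u y)))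
          * (u x * (1 - u y) * R) = 2 * (u x - u y) * R := by
      field_simp; ring
    rw [e]
    exact hfin _ (hprod _ _ (by linarith) (by linarith))
  · have e : ((1 - u x) / (u x * (1 - u x)) - (0 - u y) / (u y * (1 - u y)))
          * (u x * (1 - u y) * R)
        + ((0 - u x) / (u x * (1 - u x)) - (1 - u y) / (u y * (1 - u y)))
          * ((1 - u x) * u y * R) = 2 * (u x - u y) * R := by
      field_simp; ring
    rw [e]
    exact hfin _ (hprod _ _ (by linarith) (by linarith))
  · have e : ((1 - u x) / (u x * (1 - u x)) - (1 - u y) / (u y * (1 - u y)))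
          * (u x * u y * R)
        + ((1 - u x) / (u x * (1 - u x)) - (1 - u y) / (u y * (1 - u y)))
          * (u x * u y * R) = -(2 * (u x - u y) * R) := by
      field_simp; ring
    rw [e]
    exact hfin1 _ (hfin _ (hprod _ _ (by linarith) (by linarith)))

/-- Integration by parts: `ω_x - ω_y` against `h f dν`, for `h` invariant under the exchange of `x`
and `y`, is controlled by the Dirichlet form on the bond `{x, y}`, by the second moment of `h`, and
by the first moment of `h` weighted with the local slope of `u`. -/
theorem int_by_parts {d N : ℕ} [NeZero N] {u : Torus d N → ℝ} {c : ℝ} (hc : 0 < c) (hc1 : c ≤ 1)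
    (hu : ∀ x, c ≤ u x ∧ u x ≤ 1 - c) {x y : Torus d N} (hxy : x ≠ y)
    (h f : Config d N → ℝ) (hh : ∀ η, h (swapC x y η) = h η) (hf : ∀ η, 0 ≤ f η)
    {β : ℝ} (hβ : 0 < β) :
    ∑ η, h η * (omg u x η - omg u y η) * f η * bern u η
      ≤ β * ∑ η, (√(f (swapC x y η)) - √(f η)) ^ 2 * bern u η
        + ((c ^ 2)⁻¹) ^ 3 / β * ∑ η, h η ^ 2 * f η * bern u η
        + ((c ^ 2)⁻¹) ^ 2 * |u x - u y| * ∑ η, |h η| * f η * bern u η := by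
  set ρ := (c ^ 2)⁻¹ with hρ
  have hc2 : 0 < c ^ 2 := by positivity
  have hρ0 : 0 < ρ := inv_pos.2 hc2
  have hρ1 : 1 ≤ ρ := (one_le_inv₀ hc2).2 (pow_le_one₀ hc.le hc1)
  have hu' : ∀ x, 0 ≤ u x ∧ u x ≤ 1 := fun z => ⟨by linarith [hu z], by linarith [hu z]⟩
  have hν := fun η => bern_nonneg hu' η
  set T : Config d N → Config d N := swapC x y with hT
  -- symmetrization over the exchange
  have hsym : 2 * ∑ η, h η * (omg u x η - omg u y η) * f η * bern u η
      = ∑ η, (h η * (omg u x η - omg u y η) * f η * bern u η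
        + h η * (omg u x (T η) - omg u y (T η)) * f (T η) * bern u (T η)) := by
    rw [Finset.sum_add_distrib, two_mul]
    congr 1
    rw [← sum_swapC x y]
    exact Finset.sum_congr rfl fun η _ => by rw [hh]
  have hpt : ∀ η, h η * (omg u x η - omg u y η) * f η * bern u η
        + h η * (omg u x (T η) - omg u y (T η)) * f (T η) * bern u (T η)
      ≤ 2 * β * ((√(f (T η)) - √(f η)) ^ 2 * bern u η)
        + ρ ^ 2 / β * (h η ^ 2 * f η * bern u η + h η ^ 2 * f (T η) * bern u η)
        + 2 * ρ * |u x - u y| * (|h η| * f (T η) * bern u η) := by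
    intro η
    have hr := antisymm_defect hc hu hxy η
    rw [← hρ, ← hT] at hr
    set r := (omg u x η - omg u y η) * bern u η
        + (omg u x (T η) - omg u y (T η)) * bern u (T η) with hrdef
    have hφ : (omg u x η - omg u y η) ^ 2 ≤ 4 * ρ ^ 2 := by
      have h1 := abs_omg_le hc hu x η
      have h2 := abs_omg_le hc hu y η
      have h3 : |omg u x η - omg u y η| ≤ 2 * ρ := (abs_sub _ _).trans (by linarith)
      have h4 := pow_le_pow_left₀ (abs_nonneg _) h3 2
      rw [sq_abs] at h4
      linarith
    have hs := Real.sq_sqrt (hf η)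
    have ht := Real.sq_sqrt (hf (T η))
    set s := √(f η)
    set t := √(f (T η))
    set φ := omg u x η - omg u y η
    have e : h η * φ * f η * bern u η
        + h η * (omg u x (T η) - omg u y (T η)) * f (T η) * bern u (T η)
        = h η * φ * (s - t) * (s + t) * bern u η + h η * f (T η) * r := by
      have : (s - t) * (s + t) = f η - f (T η) := by rw [← hs, ← ht]; ring
      rw [mul_assoc (h η * φ) (s - t), this, hrdef]; ring
    rw [e]
    have h1 : h η * φ * (s - t) * (s + t)
        ≤ 2 * β * (t - s) ^ 2 + ρ ^ 2 / β * (h η ^ 2 * f η + h η ^ 2 * f (T η)) := by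
      have a1 : h η * φ * (s - t) * (s + t)
          ≤ 2 * β * (t - s) ^ 2 + (h η * φ * (s + t)) ^ 2 / (8 * β) := by
        have := sq_nonneg (4 * β * (s - t) - h η * φ * (s + t))
        rw [← sub_nonneg]
        have e : 2 * β * (t - s) ^ 2 + (h η * φ * (s + t)) ^ 2 / (8 * β)
            - h η * φ * (s - t) * (s + t)
            = (4 * β * (s - t) - h η * φ * (s + t)) ^ 2 / (8 * β) := by
          field_simp; ring
        rw [e]; positivity
      have a2 : (h η * φ * (s + t)) ^ 2 / (8 * β)
          ≤ ρ ^ 2 / β * (h η ^ 2 * f η + h η ^ 2 * f (T η)) := by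
        rw [div_mul_eq_mul_div, div_le_div_iff₀ (by positivity) hβ]
        have b1 : (s + t) ^ 2 ≤ 2 * (f η + f (T η)) := by nlinarith [sq_nonneg (s - t)]
        have b2 : φ ^ 2 * (s + t) ^ 2 ≤ 4 * ρ ^ 2 * (2 * (f η + f (T η))) :=
          mul_le_mul hφ b1 (sq_nonneg _) (by positivity)
        have b3 := mul_le_mul_of_nonneg_left b2 (mul_nonneg (sq_nonneg (h η)) hβ.le)
        nlinarith [b3]
      linarith
    have h2 : h η * f (T η) * r ≤ 2 * ρ * |u x - u y| * (|h η| * f (T η) * bern u η) := by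
      refine (le_abs_self _).trans ?_
      rw [abs_mul, abs_mul, abs_of_nonneg (hf (T η))]
      have := mul_le_mul_of_nonneg_left hr (mul_nonneg (abs_nonneg (h η)) (hf (T η)))
      linarith
    have h3 := mul_le_mul_of_nonneg_right h1 (hν η)
    linarith
  -- moving the exchange from `f` to `ν`
  have hmove : ∀ k : Config d N → ℝ, (∀ η, 0 ≤ k η) → (∀ η, k (T η) = k η) →
      ∑ η, k η * f (T η) * bern u η ≤ ρ * ∑ η, k η * f η * bern u η := by
    intro k hk hkT
    rw [← sum_swapC x y, Finset.mul_sum]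
    refine Finset.sum_le_sum fun η _ => ?_
    have hTT : T (swapC x y η) = η := swapC_involutive x y η
    rw [hTT, show k (swapC x y η) = k η from hkT η]
    have := mul_le_mul_of_nonneg_left (bern_swapC_le hc hu hxy η) (mul_nonneg (hk η) (hf η))
    rw [← hρ] at this
    linarith
  have hm1 := hmove (fun η => h η ^ 2) (fun η => sq_nonneg _) (fun η => by simp only [hh])
  have hm2 := hmove (fun η => |h η|) (fun η => abs_nonneg _) (fun η => by simp only [hh])
  have htot := Finset.sum_le_sum fun η (_ : η ∈ univ) => hpt η
  rw [← hsym, Finset.sum_add_distrib, Finset.sum_add_distrib, ← Finset.mul_sum, ← Finset.mul_sum,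
    ← Finset.mul_sum, Finset.sum_add_distrib] at htot
  have hS0 : 0 ≤ ∑ η, h η ^ 2 * f η * bern u η := Finset.sum_nonneg fun η _ =>
    mul_nonneg (mul_nonneg (sq_nonneg _) (hf η)) (hν η)
  have hρβ : 0 ≤ ρ ^ 2 / β := by positivity
  have g1 := mul_le_mul_of_nonneg_left hm1 hρβ
  have g2 := mul_le_mul_of_nonneg_left hm2 (show 0 ≤ 2 * ρ * |u x - u y| by positivity)
  have g3 : ρ ^ 2 / β * ∑ η, h η ^ 2 * f η * bern u η
      ≤ ρ ^ 3 / β * ∑ η, h η ^ 2 * f η * bern u η := by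
    refine mul_le_mul_of_nonneg_right ?_ hS0
    exact div_le_div_of_nonneg_right (pow_le_pow_right₀ hρ1 (by norm_num)) hβ.le
  have g4 : ρ ^ 2 / β * (ρ * ∑ η, h η ^ 2 * f η * bern u η)
      = ρ ^ 3 / β * ∑ η, h η ^ 2 * f η * bern u η := by ring
  have g5 : 2 * ρ * |u x - u y| * (ρ * ∑ η, |h η| * f η * bern u η)
      = 2 * (ρ ^ 2 * |u x - u y| * ∑ η, |h η| * f η * bern u η) := by ring
  linarith

/-! ### From local averages to gradients -/

theorem sum_finToT {d N : ℕ} (ℓ : ℕ) (F : Torus d N → ℝ) :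
    ∑ y : Fin d → Fin ℓ, F (finToT d N ℓ y) = ∑ w ∈ boxF (fun _ : Fin d => ℓ), F (castN d N w) := by
  refine Finset.sum_bij' (fun y _ => fun i => (y i : ℕ))
    (fun w hw => fun i => ⟨w i, mem_boxF.1 hw i⟩) ?_ ?_ ?_ ?_ ?_
  · exact fun y _ => mem_boxF.2 fun i => (y i).2
  · exact fun w _ => mem_univ _
  · exact fun y _ => rfl
  · exact fun w _ => rfl
  · exact fun y _ => rfl

/-- Moving the left average from `A` to `W`, a product of a left and a right average summed over the
torus becomes `A` against the double average of `W`. -/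
theorem sum_left_right {d N : ℕ} [NeZero N] (ℓ : ℕ) (A W : Torus d N → ℝ) (n : Torus d N) :
    ∑ x, (((ℓ : ℝ) ^ d)⁻¹ * ∑ y : Fin d → Fin ℓ, A (x - finToT d N ℓ y))
        * (((ℓ : ℝ) ^ d)⁻¹ * ∑ y : Fin d → Fin ℓ, W (x + finToT d N ℓ y + n))
      = ∑ z, A z * bavg (fun _ : Fin d => ℓ) fun y => bavg (fun _ : Fin d => ℓ)
          fun y' => W (z + n + (y + y')) := by
  have e3 : (∏ _i : Fin d, (ℓ : ℝ)) = (ℓ : ℝ) ^ d := by simp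
  have eA := fun x => sum_finToT ℓ (fun v => A (x - v))
  have eW := fun x => sum_finToT ℓ (fun v => W (x + v + n))
  simp only [eA, eW, bavg, e3]
  set P := ((ℓ : ℝ) ^ d)⁻¹
  set B := boxF fun _ : Fin d => ℓ
  have l : ∀ x, P * (∑ y ∈ B, A (x - castN d N y)) * (P * ∑ y ∈ B, W (x + castN d N y + n))
      = ∑ y ∈ B, P * P * ∑ y' ∈ B, A (x - castN d N y) * W (x + castN d N y' + n) := by
    intro x
    rw [← Finset.mul_sum, ← Finset.sum_mul_sum]
    ring
  have r : ∀ z, A z * (P * ∑ y ∈ B, P * ∑ y' ∈ B, W (z + n + (castN d N y + castN d N y')))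
      = ∑ y ∈ B, P * P * ∑ y' ∈ B, A z * W (z + n + (castN d N y + castN d N y')) := by
    intro z
    simp only [← Finset.mul_sum]
    ring
  simp only [l, r]
  rw [Finset.sum_comm]
  conv_rhs => rw [Finset.sum_comm]
  refine Finset.sum_congr rfl fun y _ =>
    Fintype.sum_equiv (Equiv.subRight (castN d N y)) _ _ fun x => ?_
  simp only [Equiv.subRight_apply]
  refine congrArg _ (Finset.sum_congr rfl fun y' _ => ?_)
  congr 2
  abel

/-- Regrouping by bonds: the coefficient of the gradient of `W` on the bond `(x, x + e_j)` is the
convolution of `A` with `ψ j`, shifted by `n`. -/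
theorem sum_flux {d N : ℕ} [NeZero N] (ψ : Fin d → EuclideanSpace ℝ (Torus d N))
    (A W : Torus d N → ℝ) (n : Torus d N) :
    ∑ z, A z * flux ψ (fun v => W (z + n + v))
      = ∑ x, ∑ j, (∑ z, ψ j (x - n - z) * A z) * (W x - W (x + uvec d N j)) := by
  have e : ∀ z, A z * flux ψ (fun v => W (z + n + v))
      = ∑ x, ∑ j, ψ j (x - n - z) * A z * (W x - W (x + uvec d N j)) := by
    intro z
    rw [flux, Finset.sum_comm, Finset.mul_sum]
    refine Fintype.sum_equiv (Equiv.addLeft (z + n)) _ _ fun v => ?_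
    rw [Finset.mul_sum]
    refine Finset.sum_congr rfl fun j _ => ?_
    have h : z + n + v - n - z = v := by abel
    rw [Equiv.coe_addLeft, h, ← add_assoc (z + n) v]
    ring
  rw [Finset.sum_congr rfl fun z _ => e z, Finset.sum_comm]
  refine Finset.sum_congr rfl fun x _ => ?_
  rw [Finset.sum_comm]
  exact Finset.sum_congr rfl fun j _ => by rw [Finset.sum_mul]

/-- The field multiplying the gradient of `ω` on the bond `(x, x + e_j)` does not see the two end
points: `ψ` lives on a box of nonnegative coordinates, and `n` has a positive component. -/
theorem field_swap {d N : ℕ} [NeZero N] (n : Fin d → ℤ) {i : Fin d} (hi : 0 < n i) {m : ℕ}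
    (hN : (m : ℤ) + n i + 1 ≤ N) (φ : Torus d N → ℝ) (hφ : SuppIn m φ)
    (Y : Torus d N → Bool → ℝ) (x : Torus d N) (j : Fin d) (η : Config d N) :
    ∑ z, φ (x - castT d N n - z) * Y z (swapC x (x + uvec d N j) η z)
      = ∑ z, φ (x - castT d N n - z) * Y z (η z) := by
  refine Finset.sum_congr rfl fun z _ => ?_
  by_cases hz : φ (x - castT d N n - z) = 0
  · simp [hz]
  obtain ⟨w, hw, e⟩ := hφ _ hz
  have hwi := hw i
  have e' : x i - (n i : ZMod N) - z i = (w i : ZMod N) := congrFun e i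
  have hno : ∀ t : ℕ, t ≤ 1 → z i ≠ x i + (t : ZMod N) := by
    intro t ht h
    have h0 : ((n i + w i + t : ℤ) : ZMod N) = 0 := by
      push_cast
      rw [← e', h]; ring
    rw [ZMod.intCast_zmod_eq_zero_iff_dvd] at h0
    have := Int.le_of_dvd (by omega) h0
    omega
  have h1 : z ≠ x := fun h => hno 0 (by omega) (by rw [h]; simp)
  have h2 : z ≠ x + uvec d N j := by
    intro h
    by_cases hij : i = j
    · exact hno 1 le_rfl (by rw [h]; simp [uvec, hij])
    · exact hno 0 (by omega) (by rw [h]; simp [uvec, hij])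
  simp [swapC, Equiv.swap_apply_of_ne_of_ne h1 h2]

/-- The forward bonds make up half of the ordered nearest-neighbour pairs; the other half is
dropped. -/
theorem forward_sum_le_dirK {d N : ℕ} [NeZero N] (g ν : Config d N → ℝ) (hν : ∀ η, 0 ≤ ν η) :
    ∑ x, ∑ i, ∑ η, (g (swapC x (x + uvec d N i) η) - g η) ^ 2 * ν η ≤ 4 * dirK g ν := by
  unfold dirK
  rw [← mul_assoc, show (4 : ℝ) * (1 / 4) = 1 by norm_num, one_mul]
  refine Finset.sum_le_sum fun x _ => Finset.sum_le_sum fun i _ => Finset.sum_le_sum fun η _ => ?_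
  have := mul_nonneg (sq_nonneg (g (swapC x (x - uvec d N i) η) - g η)) (hν η)
  rw [add_mul]
  linarith

/-- Summing the integrations by parts over all bonds: gradients of `ω` against fields `h x j`, each
invariant under the exchange across its own bond, with explicit constants on a fixed torus.  What
remains to be controlled is the second moment of the fields. -/
theorem fixed_bound {d N : ℕ} [NeZero N] (hN2 : 2 ≤ N) {u : Torus d N → ℝ} {c : ℝ} (hc : 0 < c)
    (hc1 : c ≤ 1) (hu : ∀ x, c ≤ u x ∧ u x ≤ 1 - c) {C₁ K ε : ℝ} (hC₁ : 0 < C₁) (hK : 1 ≤ K)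
    (hε : 0 < ε) (hgrad : ∀ x i, |u (x + uvec d N i) - u x| ≤ C₁ * K / N)
    (h : Torus d N → Fin d → Config d N → ℝ)
    (hh : ∀ x j η, h x j (swapC x (x + uvec d N j) η) = h x j η)
    (f : Config d N → ℝ) (hf : ∀ η, 0 ≤ f η) (hf1 : ∑ η, f η * bern u η = 1) :
    K * ∑ η, (∑ x, ∑ j, h x j η * (omg u x η - omg u (x + uvec d N j) η)) * f η * bern u η
      ≤ ε * (N : ℝ) ^ 2 * dirK (fun η => √(f η)) (bern u)
        + (4 * ((c ^ 2)⁻¹) ^ 3 / ε + ((c ^ 2)⁻¹) ^ 2 * C₁) * (K ^ 2 / N)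
          * ((∑ j, ∑ η, (∑ x, h x j η ^ 2) * f η * bern u η) + d * (N : ℝ) ^ d) := by
  set ρ := (c ^ 2)⁻¹ with hρ
  have hρ0 : 0 < ρ := by positivity
  have hu' : ∀ x, 0 ≤ u x ∧ u x ≤ 1 := fun z => ⟨by linarith [hu z], by linarith [hu z]⟩
  have hν := fun η => bern_nonneg hu' η
  have hN0 : (0 : ℝ) < N := by positivity
  have hN1 : (1 : ℝ) ≤ N := by exact_mod_cast (by omega : 1 ≤ N)
  have hK0 : 0 < K := by linarith
  have : Fact (1 < N) := ⟨by omega⟩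
  -- this weight makes the Dirichlet forms of the bonds add up to `ε N² D_K`
  set β : ℝ := ε * N ^ 2 / (4 * K) with hβ
  have hβ0 : 0 < β := by positivity
  have hbond : ∀ x j, ∑ η, h x j η * (omg u x η - omg u (x + uvec d N j) η) * f η * bern u η
      ≤ β * (∑ η, (√(f (swapC x (x + uvec d N j) η)) - √(f η)) ^ 2 * bern u η)
        + (4 * ρ ^ 3 / ε + ρ ^ 2 * C₁) * (K / N) * (∑ η, h x j η ^ 2 * f η * bern u η)
        + (4 * ρ ^ 3 / ε + ρ ^ 2 * C₁) * (K / N) := by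
    intro x j
    have hne : x ≠ x + uvec d N j := by
      intro h
      have h1 := congrFun h j
      simp [uvec] at h1
    have hibp := int_by_parts hc hc1 hu hne (h x j) f (hh x j) hf hβ0
    rw [← hρ] at hibp
    set Q := ∑ η, h x j η ^ 2 * f η * bern u η with hQ
    have hQ0 : 0 ≤ Q := Finset.sum_nonneg fun η _ =>
      mul_nonneg (mul_nonneg (sq_nonneg _) (hf η)) (hν η)
    have habs : ∑ η, |h x j η| * f η * bern u η ≤ Q + 1 := by
      rw [hQ, ← hf1, ← Finset.sum_add_distrib]
      refine Finset.sum_le_sum fun η _ => ?_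
      rw [← add_mul]
      refine mul_le_mul_of_nonneg_right ?_ (hν η)
      have h1 : |h x j η| ≤ h x j η ^ 2 + 1 := by
        rw [← sq_abs]
        nlinarith [sq_nonneg (|h x j η| - 1), abs_nonneg (h x j η)]
      have := mul_le_mul_of_nonneg_right h1 (hf η)
      linarith
    have hg : |u x - u (x + uvec d N j)| ≤ C₁ * K / N := by
      rw [abs_sub_comm]; exact hgrad x j
    have t1 : ρ ^ 2 * |u x - u (x + uvec d N j)| * (∑ η, |h x j η| * f η * bern u η)
        ≤ ρ ^ 2 * (C₁ * K / N) * (Q + 1) := by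
      have a1 : 0 ≤ ∑ η, |h x j η| * f η * bern u η := Finset.sum_nonneg fun η _ =>
        mul_nonneg (mul_nonneg (abs_nonneg _) (hf η)) (hν η)
      exact mul_le_mul (mul_le_mul_of_nonneg_left hg (sq_nonneg ρ)) habs a1 (by positivity)
    have t2 : ρ ^ 3 / β ≤ 4 * ρ ^ 3 / ε * (K / N) := by
      rw [hβ]
      have e : ρ ^ 3 / (ε * N ^ 2 / (4 * K)) = 4 * ρ ^ 3 / ε * (K / N) * (1 / N) := by
        field_simp
      rw [e]
      exact mul_le_of_le_one_right (by positivity) ((div_le_one hN0).2 hN1)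
    have t3 := mul_le_mul_of_nonneg_right t2 hQ0
    have t4 : 0 ≤ 4 * ρ ^ 3 / ε * (K / N) := by positivity
    have e : (4 * ρ ^ 3 / ε + ρ ^ 2 * C₁) * (K / N) * Q + (4 * ρ ^ 3 / ε + ρ ^ 2 * C₁) * (K / N)
        = 4 * ρ ^ 3 / ε * (K / N) * Q + ρ ^ 2 * (C₁ * K / N) * (Q + 1)
          + 4 * ρ ^ 3 / ε * (K / N) := by ring
    linarith
  set G := 4 * ρ ^ 3 / ε + ρ ^ 2 * C₁ with hG
  have hsum := Finset.sum_le_sum fun x (_ : x ∈ (univ : Finset (Torus d N))) =>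
    Finset.sum_le_sum fun j (_ : j ∈ (univ : Finset (Fin d))) => hbond x j
  simp only [Finset.sum_add_distrib, ← Finset.mul_sum] at hsum
  have e1 : ∑ η, (∑ x, ∑ j, h x j η * (omg u x η - omg u (x + uvec d N j) η)) * f η * bern u η
      = ∑ x, ∑ j, ∑ η, h x j η * (omg u x η - omg u (x + uvec d N j) η) * f η * bern u η := by
    simp only [Finset.sum_mul]
    rw [Finset.sum_comm]
    exact Finset.sum_congr rfl fun x _ => Finset.sum_comm
  have e2 : ∑ j, ∑ η, (∑ x, h x j η ^ 2) * f η * bern u η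
      = ∑ x, ∑ j, ∑ η, h x j η ^ 2 * f η * bern u η := by
    simp only [Finset.sum_mul]
    conv_rhs => rw [Finset.sum_comm]
    exact Finset.sum_congr rfl fun j _ => Finset.sum_comm
  have e3 : G * ∑ _x : Torus d N, ∑ _j : Fin d, K / (N : ℝ) = G * (K / N) * (d * (N : ℝ) ^ d) := by
    simp [ZMod.card]; ring
  have hD := forward_sum_le_dirK (fun η => √(f η)) (bern u) hν
  rw [e1, e2]
  rw [e3] at hsum
  have f1 := mul_le_mul_of_nonneg_left hsum hK0.le
  have f2 := mul_le_mul_of_nonneg_left hD (show 0 ≤ K * β by positivity)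
  have f3 : K * β * (4 * dirK (fun η => √(f η)) (bern u))
      = ε * N ^ 2 * dirK (fun η => √(f η)) (bern u) := by
    rw [hβ]; field_simp
  have f4 : ∀ q : ℝ, K * (G * (K / N) * q) = G * (K ^ 2 / N) * q := fun q => by ring
  rw [f3] at f2
  rw [mul_add, mul_add, f4, f4] at f1
  linarith

/-! ### Asymptotics in the size of the torus -/

/-- The requirements on the size of the torus: powers of `log N` are below `N ^ κ`, and the doubled
box, shifted by `b`, does not wrap around the torus. -/
theorem large_torus {d : ℕ} (hd : 2 ≤ d) {κ : ℝ} (hκ : 0 < κ) (b : ℕ) :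
    ∃ N₁ : ℕ, ∀ N : ℕ, N₁ ≤ N → 2 ≤ N ∧ (1 + Real.log N) ^ 3 ≤ (N : ℝ) ^ κ ∧
      ∀ ℓ : ℕ, (ℓ : ℝ) = (N : ℝ) ^ ((1 - κ) / d) → 2 * ℓ + b ≤ N := by
  have hκ3 : 0 < κ / 3 := by positivity
  have hlo : (fun x : ℝ => 1 + Real.log x) =o[Filter.atTop] fun x => x ^ (κ / 3) := by
    refine Asymptotics.IsLittleO.add ?_ (isLittleO_log_rpow_atTop hκ3)
    exact (Asymptotics.isLittleO_const_left.2
      (Or.inr (tendsto_norm_atTop_atTop.comp (tendsto_rpow_atTop hκ3))))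
  have hev := tendsto_natCast_atTop_atTop.eventually (hlo.bound one_pos)
  obtain ⟨N₀, hN₀⟩ := Filter.eventually_atTop.1 hev
  refine ⟨max N₀ ((b + 3) ^ 2), fun N hN => ?_⟩
  have hN1 : N₀ ≤ N := le_trans (le_max_left _ _) hN
  have hN2 : (b + 3) ^ 2 ≤ N := le_trans (le_max_right _ _) hN
  have h2 : 2 ≤ N := by nlinarith [Nat.zero_le b, Nat.zero_le (b * b)]
  have hx : (1 : ℝ) ≤ N := by exact_mod_cast (by omega : 1 ≤ N)
  have hlog := Real.log_nonneg hx
  refine ⟨h2, ?_, fun ℓ hℓ => ?_⟩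
  · have h := hN₀ N hN1
    rw [one_mul, Real.norm_of_nonneg (by linarith), Real.norm_of_nonneg (by positivity)] at h
    calc (1 + Real.log N) ^ 3 ≤ ((N : ℝ) ^ (κ / 3)) ^ 3 := by gcongr
      _ = (N : ℝ) ^ κ := by
        rw [← Real.rpow_natCast, ← Real.rpow_mul (by linarith)]
        congr 1
        push_cast
        ring
  -- as `d ≥ 2`, the box has side at most `√N`
  · have hd' : (2 : ℝ) ≤ d := by exact_mod_cast hd
    have hsq : (ℓ : ℝ) ^ 2 ≤ N := by
      calc (ℓ : ℝ) ^ 2 ≤ ((N : ℝ) ^ (1 / 2 : ℝ)) ^ 2 := by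
            rw [hℓ]
            refine pow_le_pow_left₀ (by positivity) (Real.rpow_le_rpow_of_exponent_le hx ?_) 2
            rw [div_le_div_iff₀ (by linarith) two_pos]
            nlinarith
        _ = (N : ℝ) := by
            rw [← Real.sqrt_eq_rpow, Real.sq_sqrt (by linarith)]
    have hsq' : ℓ ^ 2 ≤ N := by exact_mod_cast hsq
    rcases le_total ℓ (b + 3) with h | h <;> nlinarith

/-- The error term of `fixed_bound` for boxes of side `L = x^{(1-κ)/d}` and `x = N`: the factor
`L^d / N = N^{-κ}` absorbs the third power of `log N` collected from `K²` and from the flow. -/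
theorem error_bound {d : ℕ} {x L κ H K δ A Q c₁ : ℝ} (hx : 1 ≤ x) (hL0 : 0 ≤ L)
    (hL : L ^ d = x ^ (1 - κ)) (hH : 0 ≤ H) (hlog : (1 + Real.log x) ^ 3 ≤ x ^ κ) (hK : 1 ≤ K)
    (hKδ : K ≤ δ * √(Real.log x)) (hc₁ : 0 ≤ c₁)
    (hQ : Q ≤ d * (4 * ((2 * d * (1 + Real.log x)) ^ 2 * A ^ 2)
      * ((2 * (2 * L)) ^ d * H + x ^ d))) :
    c₁ * (K ^ 2 / x) * (Q + d * x ^ d)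
      ≤ c₁ * (16 * (d : ℝ) ^ 3 * A ^ 2 + d) * 4 ^ d * δ ^ 2 * (H + x ^ ((d : ℝ) - 1 + κ)) := by
  have hx0 : 0 < x := by linarith
  have hl := Real.log_nonneg hx
  set g := 1 + Real.log x with hg
  have hg1 : 1 ≤ g := by linarith
  have h4 : (1 : ℝ) ≤ 4 ^ d := one_le_pow₀ (by norm_num)
  have hK2 : K ^ 2 ≤ δ ^ 2 * g := by
    calc K ^ 2 ≤ (δ * √(Real.log x)) ^ 2 := by gcongr
      _ = δ ^ 2 * Real.log x := by rw [mul_pow, Real.sq_sqrt hl]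
      _ ≤ δ ^ 2 * g := by gcongr; linarith
  have hLd : 0 ≤ L ^ d := by positivity
  set T := L ^ d * H + x ^ d with hT
  have hxT : x ^ d ≤ T := by
    have := mul_nonneg hLd hH
    linarith
  have hT0 : 0 ≤ T := le_trans (by positivity) hxT
  have hQ2 : Q + d * x ^ d ≤ (16 * (d : ℝ) ^ 3 * A ^ 2 + d) * 4 ^ d * g ^ 2 * T := by
    have e : (2 * (2 * L)) ^ d * H + x ^ d ≤ 4 ^ d * T := by
      have : (2 * (2 * L)) ^ d = 4 ^ d * L ^ d := by rw [← mul_pow]; ring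
      rw [this, hT, mul_add, mul_assoc]
      have := mul_le_mul_of_nonneg_right h4 (show 0 ≤ x ^ d by positivity)
      linarith
    have e1 : Q ≤ 16 * (d : ℝ) ^ 3 * A ^ 2 * g ^ 2 * (4 ^ d * T) := by
      refine hQ.trans ?_
      calc _ = 16 * (d : ℝ) ^ 3 * A ^ 2 * g ^ 2 * ((2 * (2 * L)) ^ d * H + x ^ d) := by ring
        _ ≤ _ := by gcongr
    have e2 : (d : ℝ) * x ^ d ≤ d * (4 ^ d * g ^ 2 * T) := by
      gcongr
      calc x ^ d ≤ T := hxT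
        _ ≤ 4 ^ d * g ^ 2 * T := le_mul_of_one_le_left hT0 (by nlinarith [one_le_pow₀ hg1 (n := 2)])
    linarith
  have hxκ : x ^ κ / x * T = H + x ^ ((d : ℝ) - 1 + κ) := by
    have e1 : x ^ κ / x * x ^ (1 - κ) = 1 := by
      rw [div_mul_eq_mul_div, ← Real.rpow_add hx0]
      simp [hx0.ne']
    have e2 : x ^ κ / x * x ^ d = x ^ ((d : ℝ) - 1 + κ) := by
      rw [Real.rpow_add hx0, Real.rpow_sub hx0, Real.rpow_natCast, Real.rpow_one]
      ring
    rw [hT, hL, mul_add, ← mul_assoc, e1, e2, one_mul]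
  have hc2 : 0 ≤ 16 * (d : ℝ) ^ 3 * A ^ 2 + d := by positivity
  calc c₁ * (K ^ 2 / x) * (Q + d * x ^ d)
      ≤ c₁ * (δ ^ 2 * g / x) * ((16 * (d : ℝ) ^ 3 * A ^ 2 + d) * 4 ^ d * g ^ 2 * T) := by
        refine (mul_le_mul_of_nonneg_left hQ2 (by positivity)).trans ?_
        gcongr
    _ = c₁ * (16 * (d : ℝ) ^ 3 * A ^ 2 + d) * 4 ^ d * δ ^ 2 * (g ^ 3 / x * T) := by ring
    _ ≤ c₁ * (16 * (d : ℝ) ^ 3 * A ^ 2 + d) * 4 ^ d * δ ^ 2 * (x ^ κ / x * T) := by gcongr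
    _ = _ := by rw [hxκ]

/-- Proposition 3.1 (Replacement by local sample averages), for `d ≥ 2`:
with `ℓ = N^{(1-κ)/d}`, for every `ε₀ > 0` there is `C_{ε₀,κ} > 0` such that
`∫ (V_a - V_a^ℓ) f dν ≤ ε₀ N² D_K(√f;ν) + C_{ε₀,κ} ( H(μ|ν) + N^{d-1+κ} )`
for all large `N`, all `1 ≤ K ≤ δ (log N)^{1/2}`, all means `u ∈ [u_-,u_+]^{T_N^d}` with
`|∇¹u| ≤ C₁ K/N`, and every probability density `f` with respect to `ν = ν_{u(·)}`. -/
theorem replacement_by_local_averages (d : ℕ) (hd : 2 ≤ d)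
    (um up : ℝ) (h0m : 0 < um) (hmp : um < up) (hp1 : up < 1)
    (C₁ : ℝ) (hC₁ : 0 < C₁) (δ : ℝ) (hδ : 0 < δ)
    (a : ℝ → ℝ → ℝ → ℝ)
    (ha : ∃ M : ℝ, ∀ p q r : ℝ, p ∈ Set.Icc (0:ℝ) 1 → q ∈ Set.Icc (0:ℝ) 1 →
      r ∈ Set.Icc (0:ℝ) 1 → |a p q r| ≤ M)
    (n₁ n₂ : Fin d → ℤ)
    (hn₁pos : ∃ i, 0 < n₁ i) (hn₂pos : ∃ i, 0 < n₂ i)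
    (hn12 : n₁ ≠ n₂) (hn10 : n₁ ≠ 0) (hn20 : n₂ ≠ 0) :
    ∃ κ₀ : ℝ, 0 < κ₀ ∧ ∀ κ : ℝ, 0 < κ → κ < κ₀ →
      ∀ ε₀ : ℝ, 0 < ε₀ →
      ∃ C : ℝ, 0 < C ∧ ∃ N₁ : ℕ, ∀ (N : ℕ) [NeZero N], N₁ ≤ N →
      ∀ ℓ : ℕ, 0 < ℓ → (ℓ : ℝ) = (N:ℝ) ^ ((1 - κ) / d) →
      ∀ K : ℝ, 1 ≤ K → K ≤ δ * Real.sqrt (Real.log N) →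
      ∀ u : Torus d N → ℝ, (∀ x, u x ∈ Set.Icc um up) →
        (∀ (x : Torus d N) (i : Fin d), |u (x + uvec d N i) - u x| ≤ C₁ * K / N) →
      ∀ f : Config d N → ℝ, (∀ η, 0 ≤ f η) →
        (∑ η : Config d N, f η * bern u η = 1) →
        (∑ η : Config d N,
            ((K * ∑ x : Torus d N,
                (a (u x) (u (x + castT d N n₁)) (u (x + castT d N n₂)) * omg u x η)
                  * omg u (x + castT d N n₁) η)
             - K * ∑ x : Torus d N,
                leftAvg ℓ (fun z ξ =>
                    a (u z) (u (z + castT d N n₁)) (u (z + castT d N n₂)) * omg u z ξ) x η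
                  * rightAvg ℓ (fun z ξ => omg u (z + castT d N n₁) ξ) x η)
            * f η * bern u η)
          ≤ ε₀ * (N:ℝ)^2 * dirK (fun η => Real.sqrt (f η)) (bern u)
            + C * ((∑ η : Config d N, f η * Real.log (f η) * bern u η)
                    + (N:ℝ) ^ ((d:ℝ) - 1 + κ)) := by
  obtain ⟨M, hM⟩ := ha
  obtain ⟨i, hi⟩ := hn₁pos
  have hM0 : 0 ≤ M := (abs_nonneg _).trans
    (hM 0 0 0 (by simp) (by simp) (by simp))
  set c := min um (1 - up) with hc
  have hc0 : 0 < c := lt_min h0m (by linarith)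
  have hc1 : c ≤ 1 := (min_le_left _ _).trans (by linarith)
  set ρ := (c ^ 2)⁻¹ with hρ
  have hρ0 : 0 < ρ := by positivity
  set A := (M + 1) * ρ with hA
  have hA0 : 0 < A := by positivity
  have hd0 : (0 : ℝ) < d := by positivity
  refine ⟨1, one_pos, fun κ hκ hκ1 ε₀ hε₀ => ?_⟩
  obtain ⟨N₁, hN₁⟩ := large_torus hd hκ (n₁ i + 1).toNat
  refine ⟨(4 * ρ ^ 3 / ε₀ + ρ ^ 2 * C₁) * (16 * (d : ℝ) ^ 3 * A ^ 2 + d) * 4 ^ d * δ ^ 2,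
    by positivity, N₁, ?_⟩
  intro N _ hN ℓ hℓ0 hℓ K hK hKδ u hu hgrad f hf hf1
  obtain ⟨hN2, hlog, hbox⟩ := hN₁ N hN
  replace hbox := hbox ℓ hℓ
  have hx1 : (1 : ℝ) ≤ N := by exact_mod_cast (by omega : 1 ≤ N)
  have hcu : ∀ x, c ≤ u x ∧ u x ≤ 1 - c := fun x =>
    ⟨(min_le_left _ _).trans (hu x).1, by linarith [min_le_right um (1 - up), (hu x).2]⟩
  have hu' : ∀ x, 0 ≤ u x ∧ u x ≤ 1 := fun x => ⟨by linarith [hcu x], by linarith [hcu x]⟩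
  have hI : ∀ x, u x ∈ Set.Icc (0 : ℝ) 1 := hu'
  set n := castT d N n₁ with hn
  -- `ã_z` as a function of the occupation variable at `z`
  set Y : Torus d N → Bool → ℝ := fun z b =>
    a (u z) (u (z + n)) (u (z + castT d N n₂)) * ((bval b - u z) / chi (u z)) with hY
  have hYA : ∀ z b, |Y z b| ≤ A := by
    intro z b
    rw [hY, hA, abs_mul]
    have h1 := abs_omg_le hc0 hcu z (fun _ => b)
    have h2 := hM _ _ _ (hI z) (hI (z + n)) (hI (z + castT d N n₂))
    exact mul_le_mul (by linarith) h1 (abs_nonneg _) (by linarith)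
  have hYm : ∀ z, u z * Y z true + (1 - u z) * Y z false = 0 := by
    intro z
    simp only [hY, bval]
    simp
    ring
  obtain ⟨k, rfl⟩ : ∃ k, ℓ = k + 1 := ⟨ℓ - 1, by omega⟩
  obtain ⟨ψ, hψm, hψR, hψ⟩ := flow_double (d := d) (N := N) hd k (by omega)
  set g := 1 + Real.log N with hg
  have hg1 : 1 ≤ g := by linarith [Real.log_nonneg hx1]
  have hR : 2 * (d * ((harmonic k : ℚ) : ℝ)) ≤ 2 * d * g := by
    have h1 := harmonic_le_one_add_log k
    have h2 : Real.log k ≤ Real.log N := by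
      rcases Nat.eq_zero_or_pos k with rfl | hk
      · simpa using Real.log_nonneg hx1
      · exact Real.log_le_log (by exact_mod_cast hk) (by exact_mod_cast (by omega : k ≤ N))
    have h3 : ((harmonic k : ℚ) : ℝ) ≤ g := by linarith
    have := mul_le_mul_of_nonneg_left h3 hd0.le
    linarith
  have hψS : ∀ j, ∑ v, ψ j v ^ 2 ≤ (2 * d * g) ^ 2 := by
    intro j
    have h1 := pow_le_pow_left₀ (norm_nonneg _) ((hψR j).trans hR) 2
    rw [EuclideanSpace.norm_sq_eq] at h1
    simpa using h1
  -- the local field multiplying the gradient of `ω` on the bond `(x, x + e_j)`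
  set h : Torus d N → Fin d → Config d N → ℝ := fun x j η =>
    ∑ z, ψ j (x - n - z) * Y z (η z) with hh
  have hfix := fixed_bound hN2 hc0 hc1 hcu hC₁ hK hε₀ hgrad h
    (fun x j η => field_swap n₁ hi (by push_cast; omega) (ψ j) (hψm j) Y x j η) f hf hf1
  have hQ : (∑ j, ∑ η, (∑ x, h x j η ^ 2) * f η * bern u η)
      ≤ d * (4 * ((2 * d * g) ^ 2 * A ^ 2) * ((2 * (2 * ((k + 1 : ℕ) : ℝ))) ^ d
        * (∑ η, f η * Real.log (f η) * bern u η) + (N : ℝ) ^ d)) := by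
    have hj : ∀ j ∈ (univ : Finset (Fin d)), ∑ η, (∑ x, h x j η ^ 2) * f η * bern u η
        ≤ 4 * ((2 * d * g) ^ 2 * A ^ 2) * ((2 * (2 * ((k + 1 : ℕ) : ℝ))) ^ d
          * (∑ η, f η * Real.log (f η) * bern u η) + (N : ℝ) ^ d) := by
      intro j _
      have := sum_sq_bound hu' hA0 Y hYA hYm f hf hf1 n (ψ j) (by omega) (hψm j)
        (show 0 < (2 * d * g) ^ 2 by positivity) (hψS j)
      push_cast at this ⊢
      exact this
    refine (Finset.sum_le_sum hj).trans (le_of_eq ?_)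
    simp
  have hL : (((k + 1 : ℕ) : ℝ)) ^ d = (N : ℝ) ^ (1 - κ) := by
    rw [hℓ, ← Real.rpow_natCast, ← Real.rpow_mul (by linarith), div_mul_cancel₀ _ hd0.ne']
  have herr := error_bound (d := d) (c₁ := 4 * ρ ^ 3 / ε₀ + ρ ^ 2 * C₁) hx1
    (Nat.cast_nonneg (k + 1)) hL (entropy_nonneg hu' f hf hf1) hlog hK hKδ (by positivity) hQ
  -- the difference of the two functionals is the field against the gradient of `ω`
  have hid : ∀ η, K * ∑ x, a (u x) (u (x + n)) (u (x + castT d N n₂)) * omg u x η * omg u (x + n) η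
      - K * ∑ x, leftAvg (k + 1) (fun z ξ =>
            a (u z) (u (z + n)) (u (z + castT d N n₂)) * omg u z ξ) x η
          * rightAvg (k + 1) (fun z ξ => omg u (z + n) ξ) x η
      = K * ∑ x, ∑ j, h x j η * (omg u x η - omg u (x + uvec d N j) η) := by
    intro η
    have h1 := sum_left_right (k + 1) (fun z => Y z (η z)) (fun v => omg u v η) n
    have h2 := sum_flux ψ (fun z => Y z (η z)) (fun v => omg u v η) n
    have h3 : ∑ x, leftAvg (k + 1) (fun z ξ =>
            a (u z) (u (z + n)) (u (z + castT d N n₂)) * omg u z ξ) x η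
          * rightAvg (k + 1) (fun z ξ => omg u (z + n) ξ) x η = _ := h1
    have h4 : ∑ x, a (u x) (u (x + n)) (u (x + castT d N n₂)) * omg u x η * omg u (x + n) η
        = ∑ x, Y x (η x) * omg u (x + n) η := rfl
    rw [h3, h4, ← mul_sub, ← Finset.sum_sub_distrib]
    refine congrArg _ (Eq.trans ?_ h2)
    refine Finset.sum_congr rfl fun z _ => ?_
    rw [← hψ]
    dsimp only
    rw [add_zero, mul_sub]
  have hlhs : ∀ η, (K * ∑ x, a (u x) (u (x + n)) (u (x + castT d N n₂)) * omg u x η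
        * omg u (x + n) η
      - K * ∑ x, leftAvg (k + 1) (fun z ξ =>
            a (u z) (u (z + n)) (u (z + castT d N n₂)) * omg u z ξ) x η
          * rightAvg (k + 1) (fun z ξ => omg u (z + n) ξ) x η) * f η * bern u η
      = K * ((∑ x, ∑ j, h x j η * (omg u x η - omg u (x + uvec d N j) η)) * f η * bern u η) :=
    fun η => by rw [hid]; ring
  rw [Finset.sum_congr rfl fun η _ => hlhs η, ← Finset.mul_sum]
  exact hfix.trans (by linarith)
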